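/- For all positive integers n and d there exists a bound D = D(n, d) depending only on n and d with the following property: for every field k of characteristic p > D, every k-algebra endomorphism φ of the n-th Weyl algebra A = A_n(k) with deg(φ) ≤ d such that the bimodule ₍φ₎A₍φ₎ is finitely generated is an isomorphism. -/

import Mathlib

/-- The commutation relations defining the `n`-th Weyl algebra over `R`:
`[x_i, x_j] = 0`, `[∂_i, ∂_j] = 0`, `[∂_i, x_j] = δ_{ij}`.  Generators are indexed by
`Fin n ⊕ Fin n`, with `.inl i` corresponding to `x_i` and `.inr i` to `∂_i`. -/
inductive WeylRel (R : Type*) [CommRing R] (n : ℕ) :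
    FreeAlgebra R (Fin n ⊕ Fin n) → FreeAlgebra R (Fin n ⊕ Fin n) → Prop
  | xx (i j : Fin n) : WeylRel R n
      (FreeAlgebra.ι R (.inl i) * FreeAlgebra.ι R (.inl j))
      (FreeAlgebra.ι R (.inl j) * FreeAlgebra.ι R (.inl i))
  | dd (i j : Fin n) : WeylRel R n
      (FreeAlgebra.ι R (.inr i) * FreeAlgebra.ι R (.inr j))
      (FreeAlgebra.ι R (.inr j) * FreeAlgebra.ι R (.inr i))
  | dx (i j : Fin n) : WeylRel R n
      (FreeAlgebra.ι R (.inr i) * FreeAlgebra.ι R (.inl j))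
      (FreeAlgebra.ι R (.inl j) * FreeAlgebra.ι R (.inr i) + if i = j then 1 else 0)

/-- The `n`-th Weyl algebra `A_n(R)` over a commutative ring `R`, as the quotient of the
free `R`-algebra on `x_1, …, x_n, ∂_1, …, ∂_n` by the Weyl relations. -/
abbrev WeylAlgebra (R : Type*) [CommRing R] (n : ℕ) : Type _ := RingQuot (WeylRel R n)

/-- The generator `x_i` of the Weyl algebra. -/
noncomputable def wX (R : Type*) [CommRing R] {n : ℕ} (i : Fin n) : WeylAlgebra R n :=
  RingQuot.mkAlgHom R (WeylRel R n) (FreeAlgebra.ι R (.inl i))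

/-- The generator `∂_i` of the Weyl algebra. -/
noncomputable def wD (R : Type*) [CommRing R] {n : ℕ} (i : Fin n) : WeylAlgebra R n :=
  RingQuot.mkAlgHom R (WeylRel R n) (FreeAlgebra.ι R (.inr i))

/-- The standard monomial `x^u ∂^v = x_1^{u_1} ⋯ x_n^{u_n} ∂_1^{v_1} ⋯ ∂_n^{v_n}`. -/
noncomputable def stdMon (R : Type*) [CommRing R] {n : ℕ} (u v : Fin n → ℕ) :
    WeylAlgebra R n :=
  (List.ofFn fun i => wX R i ^ u i).prod * (List.ofFn fun i => wD R i ^ v i).prod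

/-- The degree of an element of the Weyl algebra: the least `d` such that the element is an
`R`-linear combination of standard monomials `x^u ∂^v` with `|u| + |v| ≤ d`. -/
noncomputable def wdeg {R : Type*} [CommRing R] {n : ℕ} (f : WeylAlgebra R n) : ℕ :=
  sInf {d : ℕ | f ∈ Submodule.span R {g | ∃ u v : Fin n → ℕ,
      (∑ i, u i) + (∑ i, v i) ≤ d ∧ g = stdMon R u v}}

/-- The degree of an endomorphism of the Weyl algebra: the maximum of the degrees of the
images of the generators `x_1, …, x_n, ∂_1, …, ∂_n`. -/
noncomputable def weylHomDeg {R : Type*} [CommRing R] {n : ℕ}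
    (φ : WeylAlgebra R n →ₐ[R] WeylAlgebra R n) : ℕ :=
  Finset.univ.sup fun i : Fin n => max (wdeg (φ (wX R i))) (wdeg (φ (wD R i)))

universe u

/-!
In characteristic `p` the center `Z` of the Weyl algebra `A` is the polynomial ring on the `p`-th
powers of the generators, and `A` is free over `Z` on the standard monomials with exponents `< p`.
An endomorphism `φ` restricts to an endomorphism `f` of `Z` of degree `≤ d`, and `A` is free over
`Z` on the `φ(x^u ∂^v)` as well, so finite generation of the bimodule makes `f` finite.

A finite `f` of degree `≤ d` is an extension of bounded degree, hence separable and tame for large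
`p`. The maximum of the degree valuation over all conjugates is then a norm on `Z` for which the
monomials with exponents `< p` in the `f(X_i)` are orthogonal over the `p`-th powers, and for which
the elements of small norm are constants.

Weighting `φ(A)` by degree and `Z` by the `p`-th power of this norm gives a filtration of `A` for
which commutators have smaller order, so that `p`-th powers are additive modulo lower order. Write a
generator as `y = ∑ h_s φ(x^u ∂^v)`, where `s = (u, v)` and `h_s ∈ Z`. Since `y ^ p` is a generator
of `Z`, orthogonality bounds the norm of every `h_s`; hence every `h_s` is a constant and `y` lies
in the image of `φ`.
-/

section Valuations

variable {Γ : Type*} [LinearOrderedCommGroupWithZero Γ]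

open MvPolynomial in
open Classical in
/-- The degree valuation `a ↦ exp (totalDegree a)` on a polynomial ring over a domain, i.e. the
order of the pole along the hyperplane at infinity. -/
noncomputable def totalDegreeValuation (σ R : Type*) [CommRing R] [IsDomain R] :
    Valuation (MvPolynomial σ R) (WithZero (Multiplicative ℤ)) where
  toFun a := if a = 0 then 0 else WithZero.exp (a.totalDegree : ℤ)
  map_zero' := by simp
  map_one' := by simp
  map_mul' a b := by
    by_cases ha : a = 0
    · simp [ha]
    by_cases hb : b = 0
    · simp [hb]
    simp [ha, hb, totalDegree_mul_of_isDomain ha hb, WithZero.exp_add]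
  map_add_le_max' a b := by
    by_cases ha : a = 0
    · simp [ha]
    by_cases hb : b = 0
    · simp [hb]
    by_cases hab : a + b = 0
    · simp [hab]
    simpa [ha, hb, hab] using totalDegree_add a b

theorem totalDegreeValuation_apply {σ R : Type*} [CommRing R] [IsDomain R]
    {a : MvPolynomial σ R} (ha : a ≠ 0) :
    totalDegreeValuation σ R a = WithZero.exp (a.totalDegree : ℤ) :=
  if_neg ha

theorem exists_valuationSubring_comap_isEquiv {K Ω : Type*} [Field K] [Field Ω]
    (v : Valuation K Γ) (g : K →+* Ω) :
    ∃ A : ValuationSubring Ω, (A.valuation.comap g).IsEquiv v := by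
  let O := v.valuationSubring
  obtain ⟨A, mem_A, hlocal⟩ := IsLocalRing.exists_factor_valuationRing (g.comp O.subtype)
  refine ⟨A, Valuation.isEquiv_of_val_le_one fun x => ?_⟩
  rw [Valuation.comap_apply, ValuationSubring.valuation_le_one_iff]
  refine ⟨fun hgx => ?_, fun hx => mem_A ⟨x, hx⟩⟩
  by_contra! hx
  have hx0 : x ≠ 0 := by rintro rfl; simp at hx
  let y : O := ⟨x⁻¹, by simpa [O] using inv_le_one_of_one_le₀ hx.le⟩
  have unit_gy : IsUnit ((g.comp O.subtype).codRestrict A.toSubring mem_A y) :=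
    IsUnit.of_mul_eq_one ⟨g x, hgx⟩ (Subtype.ext (by simp [y, hx0]))
  obtain ⟨u, hu⟩ := (hlocal.map_nonunit _ unit_gy).exists_right_inv
  have hux : (u : K) = x := by
    have : x⁻¹ * u = 1 := congrArg Subtype.val hu
    rw [← inv_inj, ← eq_inv_of_mul_eq_one_left this]
  exact hx.not_ge (hux ▸ u.2)

theorem exists_valuationSubring_comap_isEquiv_of_injective {R Ω : Type*} [CommRing R] [IsDomain R]
    [Field Ω] (v : Valuation R Γ) (hv : ∀ a, a ≠ 0 → v a ≠ 0) (g : R →+* Ω)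
    (hg : Function.Injective g) :
    ∃ A : ValuationSubring Ω, (A.valuation.comap g).IsEquiv v := by
  have hS : nonZeroDivisors R ≤ v.supp.primeCompl := fun a ha hav =>
    hv a (nonZeroDivisors.ne_zero ha) ((v.mem_supp_iff a).1 hav)
  obtain ⟨A, hA⟩ := exists_valuationSubring_comap_isEquiv
    (v.extendToLocalization hS (FractionRing R)) (IsFractionRing.lift hg)
  refine ⟨A, fun a b => ?_⟩
  simpa using hA (algebraMap R (FractionRing R) a) (algebraMap R (FractionRing R) b)

section TotalDegree

open MvPolynomial

variable {σ R : Type*} [CommRing R] [IsDomain R] {v : Valuation (MvPolynomial σ R) Γ}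

theorem one_lt_valuation_X (hv : v.IsEquiv (totalDegreeValuation σ R)) (i : σ) : 1 < v (X i) := by
  rw [hv.one_lt_iff_one_lt, totalDegreeValuation_apply (X_ne_zero i), totalDegree_X,
    ← WithZero.exp_zero]
  exact WithZero.exp_lt_exp.2 Int.zero_lt_one

theorem valuation_eq_pow_totalDegree (hv : v.IsEquiv (totalDegreeValuation σ R)) (i : σ)
    {a : MvPolynomial σ R} (ha : a ≠ 0) : v a = v (X i) ^ a.totalDegree := by
  rw [← map_pow, hv.eq_iff, totalDegreeValuation_apply ha,
    totalDegreeValuation_apply (pow_ne_zero _ (X_ne_zero i)), totalDegree_X_pow]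

theorem valuation_le_pow_of_totalDegree_le (hv : v.IsEquiv (totalDegreeValuation σ R)) (i : σ)
    {a : MvPolynomial σ R} {n : ℕ} (ha : a.totalDegree ≤ n) : v a ≤ v (X i) ^ n := by
  rcases eq_or_ne a 0 with rfl | ha0
  · simp
  · rw [valuation_eq_pow_totalDegree hv i ha0]
    exact pow_le_pow_right₀ (one_lt_valuation_X hv i).le ha

end TotalDegree

section CommRing

variable {R : Type*} [CommRing R] (v : Valuation R Γ)

theorem valuation_le_of_isRoot {G : Polynomial R} {c : Γ} (hc : 1 ≤ c)
    (hlead : 1 ≤ v G.leadingCoeff) (hcoeff : ∀ i, v (G.coeff i) ≤ c) {z : R} (hz : G.IsRoot z) :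
    v z ≤ c := by
  by_contra! hcz
  have one_lt : 1 < v z := hc.trans_lt hcz
  have pos : 0 < v z := zero_lt_one.trans one_lt
  have lower_lt : v (∑ i ∈ Finset.range G.natDegree, G.coeff i * z ^ i) < v z ^ G.natDegree := by
    refine v.map_sum_lt (pow_pos pos _).ne' fun i hi => ?_
    calc v (G.coeff i * z ^ i) = v (G.coeff i) * v z ^ i := by rw [map_mul, map_pow]
      _ < v z * v z ^ i := mul_lt_mul_of_pos_right ((hcoeff i).trans_lt hcz) (pow_pos pos _)
      _ = v z ^ (i + 1) := (pow_succ' _ _).symm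
      _ ≤ v z ^ G.natDegree := pow_le_pow_right₀ one_lt.le (Finset.mem_range.1 hi)
  have le_top : v z ^ G.natDegree ≤ v (G.leadingCoeff * z ^ G.natDegree) := by
    rw [map_mul, map_pow]
    exact le_mul_of_one_le_left' hlead
  rw [Polynomial.IsRoot.def, Polynomial.eval_eq_sum_range, Finset.sum_range_succ] at hz
  rw [eq_neg_of_add_eq_zero_left hz, Valuation.map_neg] at lower_lt
  exact (lower_lt.trans_le le_top).false

theorem valuation_coeff_prod_X_sub_C_le {c : Γ} (hc : 1 ≤ c) (s : Multiset R)
    (hs : ∀ r ∈ s, v r ≤ c) (i : ℕ) :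
    v ((s.map fun r => Polynomial.X - Polynomial.C r).prod.coeff i) ≤ c ^ s.card := by
  induction s using Multiset.induction_on generalizing i with
  | empty =>
    rw [Multiset.map_zero, Multiset.prod_zero, Polynomial.coeff_one]
    split_ifs <;> simp
  | cons a s ih =>
    have ih' := ih fun r hr => hs r (Multiset.mem_cons_of_mem hr)
    rw [Multiset.map_cons, Multiset.prod_cons, Multiset.card_cons, sub_mul, Polynomial.coeff_sub,
      Polynomial.coeff_C_mul]
    refine (v.map_sub _ _).trans (max_le ?_ ?_)
    · cases i with
      | zero => simp
      | succ i =>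
        rw [Polynomial.coeff_X_mul]
        exact (ih' i).trans (pow_le_pow_right₀ hc (Nat.le_succ _))
    · rw [map_mul, pow_succ']
      exact mul_le_mul' (hs a (Multiset.mem_cons_self _ _)) (ih' i)

end CommRing

-- Grouping equal values, this is the linear independence of the characters `j ↦ a ^ j` of `ℕ`.
theorem exists_sum_pow_succ_ne_zero {F S : Type*} [Field F] (p : ℕ) [CharP F p] [Fintype S]
    (hS : Fintype.card S < p) (q : S → F) {s₀ : S} (hs₀ : q s₀ ≠ 0) :
    ∃ j : ℕ, ∑ s, q s ^ (j + 1) ≠ 0 := by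
  classical
  by_contra! hzero
  let mult (a : F) : F := (Finset.univ.filter fun s => q s = a).card
  have characters_indep : LinearIndependent F fun a : F => (⇑(powersHom F a) : _ → F) :=
    (linearIndependent_monoidHom (Multiplicative ℕ) F).comp _ (powersHom F).injective
  have relation : ∑ a ∈ Finset.univ.image q, (mult a * a) • (⇑(powersHom F a) : _ → F) = 0 := by
    funext j
    rw [Pi.zero_apply, ← hzero j.toAdd,
      ← Finset.sum_fiberwise_of_maps_to fun s _ => Finset.mem_image_of_mem q (Finset.mem_univ s),
      Finset.sum_apply]
    refine Finset.sum_congr rfl fun a _ => ?_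
    rw [Finset.sum_congr rfl (g := fun _ => a ^ (j.toAdd + 1)) fun s hs => by
      rw [(Finset.mem_filter.1 hs).2]]
    simp [mult, pow_succ', mul_assoc]
  have mult_eq_zero : mult (q s₀) = 0 :=
    (mul_eq_zero.1 (linearIndependent_iff'.1 characters_indep _ _ relation _
      (Finset.mem_image_of_mem q (Finset.mem_univ s₀)))).resolve_right hs₀
  have pos : 0 < (Finset.univ.filter fun s => q s = q s₀).card :=
    Finset.card_pos.2 ⟨s₀, by simp⟩
  have := Nat.le_of_dvd pos ((CharP.cast_eq_zero_iff F p _).1 mult_eq_zero)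
  exact (this.trans (Finset.card_filter_le _ _)).not_gt hS

theorem exists_valuation_sum_pow_succ_eq {Ω S : Type*} [Field Ω] (A : ValuationSubring Ω)
    [Fintype S] (p : ℕ) [Fact p.Prime] [CharP Ω p] (hS : Fintype.card S < p) (t : S → Ω) {s₀ : S}
    (ht : t s₀ ≠ 0) (hmax : ∀ s, A.valuation (t s) ≤ A.valuation (t s₀)) :
    ∃ j : ℕ, A.valuation (∑ s, t s ^ (j + 1)) = A.valuation (t s₀) ^ (j + 1) := by
  have pos : 0 < A.valuation (t s₀) := zero_lt_iff.2 (by simpa using ht)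
  let r (s : S) : A := ⟨t s / t s₀, by
    rw [← ValuationSubring.valuation_le_one_iff, map_div₀, div_le_one₀ pos]
    exact hmax s⟩
  have : CharP A p := (RingHom.charP_iff A.subtype Subtype.val_injective p).2 inferInstance
  have : CharP (IsLocalRing.ResidueField A) p := charP_of_injective_ringHom
    (f := (IsLocalRing.residue A).comp (ZMod.castHom (dvd_refl p) A)) (RingHom.injective _) p
  have hr : r s₀ = 1 := Subtype.ext (div_self ht)
  obtain ⟨j, hj⟩ := exists_sum_pow_succ_ne_zero p hS (fun s => IsLocalRing.residue A (r s))
    (s₀ := s₀) (by simp [hr])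
  refine ⟨j, ?_⟩
  have unit : IsUnit (∑ s, r s ^ (j + 1)) := by
    by_contra hnonunit
    exact hj (by simpa using (IsLocalRing.residue_eq_zero_iff _).2 hnonunit)
  have sum_r : ((∑ s, r s ^ (j + 1) : A) : Ω) = (∑ s, t s ^ (j + 1)) / t s₀ ^ (j + 1) := by
    simp [r, div_pow, Finset.sum_div]
  have := (ValuationSubring.valuation_eq_one_iff A _).1 unit
  rwa [sum_r, map_div₀, map_pow, div_eq_one_iff_eq (pow_pos pos _).ne'] at this

end Valuations

section Polynomials

open MvPolynomial

theorem totalDegree_algHom_apply_le {σ τ R : Type*} [CommSemiring R]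
    (f : MvPolynomial σ R →ₐ[R] MvPolynomial τ R) {d : ℕ} (hf : ∀ i, (f (X i)).totalDegree ≤ d)
    (a : MvPolynomial σ R) : (f a).totalDegree ≤ a.totalDegree * d := by
  have map_monomial (u : σ →₀ ℕ) (c : R) : (f (monomial u c)).totalDegree ≤ u.degree * d := by
    rw [monomial_eq, map_mul, ← algebraMap_eq, f.commutes, algebraMap_eq, Finsupp.prod, map_prod,
      Finsupp.degree_apply, Finset.sum_mul]
    refine (totalDegree_mul _ _).trans ?_
    rw [totalDegree_C, zero_add]
    refine (totalDegree_finsetProd _ _).trans (Finset.sum_le_sum fun i _ => ?_)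
    rw [map_pow]
    exact (totalDegree_pow _ _).trans (Nat.mul_le_mul_left _ (hf i))
  rw [a.as_sum, map_sum, ← a.as_sum]
  exact totalDegree_finsetSum_le fun u hu =>
    (map_monomial u _).trans (Nat.mul_le_mul_right _ (le_totalDegree hu))

theorem finrank_restrictDegree (σ R : Type*) [Fintype σ] [CommRing R] [Nontrivial R] (m : ℕ) :
    Module.finrank R (restrictDegree σ R m) = (m + 1) ^ Fintype.card σ := by
  let e : {u : σ →₀ ℕ | ∀ i, u i ≤ m} ≃ (σ → Fin (m + 1)) :=
    { toFun u i := ⟨u.1 i, Nat.lt_succ_of_le (u.2 i)⟩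
      invFun w := ⟨Finsupp.equivFunOnFinite.symm fun i => (w i : ℕ), fun i => (w i).is_le⟩
      left_inv _ := Subtype.ext (Finsupp.ext fun _ => rfl)
      right_inv _ := rfl }
  rw [restrictDegree, Module.finrank_eq_nat_card_basis (basisRestrictSupport R _),
    Nat.card_congr e, Nat.card_fun, Nat.card_eq_fintype_card, Nat.card_eq_fintype_card,
    Fintype.card_fin]

theorem totalDegree_le_of_mem_restrictDegree {σ R : Type*} [Fintype σ] [CommSemiring R] {m : ℕ}
    {a : MvPolynomial σ R} (ha : a ∈ restrictDegree σ R m) :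
    a.totalDegree ≤ Fintype.card σ * m := by
  refine Finset.sup_le fun u hu => ?_
  rw [Finsupp.sum_fintype _ _ fun _ => rfl, ← smul_eq_mul, ← Finset.card_univ]
  exact Finset.sum_le_card_nsmul _ _ _ fun i _ => (mem_restrictDegree _ _ _).1 ha u hu i

-- A dimension count: `s` is chosen so large that `F` cannot be injective on `restrictDegree τ k s`.
theorem exists_ne_zero_algHom_apply_eq_zero {σ τ k : Type*} [Fintype σ] [Fintype τ] [Field k]
    (F : MvPolynomial τ k →ₐ[k] MvPolynomial σ k) {d s : ℕ} (hF : ∀ i, (F (X i)).totalDegree ≤ d)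
    (hcard : Fintype.card σ < Fintype.card τ)
    (hs : (Fintype.card τ * d + 1) ^ Fintype.card σ ≤ s) :
    ∃ H ∈ restrictDegree τ k s, H ≠ 0 ∧ F H = 0 := by
  set t := Fintype.card τ * s * d with ht
  have maps_to : ∀ H ∈ restrictDegree τ k s, F.toLinearMap H ∈ restrictDegree σ k t := fun H hH =>
    restrictTotalDegree_le_restrictDegree _ _ t ((mem_restrictTotalDegree _ _ _).2
      ((totalDegree_algHom_apply_le F hF H).trans
        (Nat.mul_le_mul_right d (totalDegree_le_of_mem_restrictDegree hH))))
  have finrank_lt : (t + 1) ^ Fintype.card σ < (s + 1) ^ Fintype.card τ := calc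
    (t + 1) ^ Fintype.card σ ≤ ((Fintype.card τ * d + 1) * (s + 1)) ^ Fintype.card σ :=
      Nat.pow_le_pow_left (by rw [ht]; nlinarith) _
    _ = (Fintype.card τ * d + 1) ^ Fintype.card σ * (s + 1) ^ Fintype.card σ := mul_pow _ _ _
    _ < (s + 1) * (s + 1) ^ Fintype.card σ :=
      Nat.mul_lt_mul_of_pos_right (Nat.lt_succ_of_le hs) (by positivity)
    _ = (s + 1) ^ (Fintype.card σ + 1) := (pow_succ' _ _).symm
    _ ≤ (s + 1) ^ Fintype.card τ := Nat.pow_le_pow_right s.succ_pos hcard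
  rw [← finrank_restrictDegree σ k, ← finrank_restrictDegree τ k] at finrank_lt
  have : Module.Finite k (restrictDegree τ k s) :=
    Module.finite_of_finrank_pos (Nat.zero_lt_of_lt finrank_lt)
  have : Module.Finite k (restrictDegree σ k t) :=
    Module.finite_of_finrank_pos (by simp [finrank_restrictDegree])
  obtain ⟨H, hker, hne⟩ := Submodule.exists_mem_ne_zero_of_ne_bot
    (LinearMap.ker_ne_bot_of_finrank_lt (f := F.toLinearMap.restrict maps_to) finrank_lt)
  exact ⟨H, H.2, by simpa using hne, congrArg Subtype.val hker⟩

theorem exists_polynomial_relation {σ k : Type*} [Fintype σ] [Field k] {d s : ℕ}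
    (hs : ((Fintype.card σ + 1) * d + 1) ^ Fintype.card σ ≤ s)
    (f : MvPolynomial σ k →ₐ[k] MvPolynomial σ k) (hf : ∀ i, (f (X i)).totalDegree ≤ d)
    {z : MvPolynomial σ k} (hz : z.totalDegree ≤ d) :
    ∃ G : Polynomial (MvPolynomial σ k), G ≠ 0 ∧ G.natDegree ≤ s ∧
      (∀ i, (G.coeff i).totalDegree ≤ (Fintype.card σ + 1) * s) ∧
      G.eval₂ (f : MvPolynomial σ k →+* MvPolynomial σ k) z = 0 := by
  let F : MvPolynomial (Option σ) k →ₐ[k] MvPolynomial σ k :=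
    aeval fun o => o.elim z fun i => f (X i)
  obtain ⟨H, hH, hne, hFH⟩ := exists_ne_zero_algHom_apply_eq_zero F (d := d) (s := s)
    (by rintro (_ | i) <;> simp [F, hz, hf]) (by simp) (by simpa using hs)
  have F_eq (a) : F a = (optionEquivLeft k σ a).eval₂ f z := by
    induction a using MvPolynomial.induction_on with
    | C c => simp [F, ← algebraMap_eq]
    | add a b ha hb => simp [Polynomial.eval₂_add, ha, hb]
    | mul_X a o ha =>
      rw [map_mul, map_mul, ha, Polynomial.eval₂_mul]
      cases o <;> simp [F]
  refine ⟨optionEquivLeft k σ H, by simpa using hne, ?_, fun i => ?_, (F_eq H).symm.trans hFH⟩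
  · rw [natDegree_optionEquivLeft, degreeOf_le_iff]
    exact fun u hu => (mem_restrictDegree _ _ _).1 hH u hu none
  · refine (totalDegree_coeff_optionEquivLeft_le k σ H i).trans ?_
    simpa using totalDegree_le_of_mem_restrictDegree hH

theorem injective_of_finite_algHom {σ k : Type*} [Finite σ] [Field k]
    (f : MvPolynomial σ k →ₐ[k] MvPolynomial σ k)
    (hf : (f : MvPolynomial σ k →+* MvPolynomial σ k).Finite) : Function.Injective f := by
  let x (i : σ) : MvPolynomial σ k := f (X i)
  have hx : aeval x = f := by ext i; simp [x]
  have : Algebra.IsIntegral (Algebra.adjoin k (Set.range x)) (MvPolynomial σ k) := by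
    rw [Algebra.adjoin_range_eq_range_aeval, hx, Algebra.isIntegral_def]
    exact RingHom.IsIntegral.tower_top f.rangeRestrict.toRingHom _ hf.to_isIntegral
  have := Algebra.IsIntegral.isAlgebraic
    (R := Algebra.adjoin k (Set.range x)) (A := MvPolynomial σ k)
  have hb : IsTranscendenceBasis k x :=
    Algebra.IsAlgebraic.isTranscendenceBasis_of_lift_le_trdeg_of_finite k x
      (by rw [MvPolynomial.trdeg_of_isDomain]; simp)
  simpa [AlgebraicIndependent, hx] using hb.1

theorem coeff_add_smul_sum_monomial_mul_pow {σ R : Type*} [CommRing R] (p : ℕ) [Fact p.Prime]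
    [CharP R p] {S : Finset (σ →₀ ℕ)} (hS : ∀ s ∈ S, ∀ i, s i < p)
    (a : (σ →₀ ℕ) → MvPolynomial σ R) {s : σ →₀ ℕ} (hs : s ∈ S) (u : σ →₀ ℕ) :
    coeff (s + p • u) (∑ t ∈ S, monomial t 1 * a t ^ p) = coeff u (a s) ^ p := by
  classical
  have hp : p ≠ 0 := (Fact.out : p.Prime).ne_zero
  rw [coeff_sum, Finset.sum_eq_single_of_mem s hs fun t ht hts => ?_]
  · rw [coeff_monomial_mul, one_mul, ← MvPolynomial.map_frobenius_expand (p := p), coeff_map,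
      coeff_expand_smul _ hp, frobenius_def]
  · obtain ⟨i, hi⟩ := Finsupp.ne_iff.1 hts
    rw [coeff_monomial_mul', one_mul]
    split_ifs with hle
    · rw [← MvPolynomial.map_frobenius_expand (p := p), coeff_map,
        coeff_expand_of_not_dvd (i := i), map_zero]
      intro hdvd
      have : t i ≡ s i + p * u i [MOD p] := (Nat.modEq_iff_dvd' (hle i)).2 hdvd
      exact hi (Nat.ModEq.eq_of_lt_of_lt (this.trans (by simp [Nat.ModEq])) (hS t ht i) (hS s hs i))
    · rfl

theorem totalDegreeValuation_le_sum_monomial_mul_pow {σ R : Type*} [CommRing R] [IsDomain R]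
    (p : ℕ) [Fact p.Prime] [CharP R p] {S : Finset (σ →₀ ℕ)} (hS : ∀ s ∈ S, ∀ i, s i < p)
    (a : (σ →₀ ℕ) → MvPolynomial σ R) {s : σ →₀ ℕ} (hs : s ∈ S) :
    totalDegreeValuation σ R (monomial s 1 * a s ^ p) ≤
      totalDegreeValuation σ R (∑ t ∈ S, monomial t 1 * a t ^ p) := by
  have hp : p ≠ 0 := (Fact.out : p.Prime).ne_zero
  rcases eq_or_ne (a s) 0 with has | has
  · simp [has, hp]
  obtain ⟨u, hu, hdeg⟩ := Finset.exists_mem_eq_sup (a s).support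
    (by simpa [Finset.nonempty_iff_ne_empty] using has) fun u => u.sum fun _ e => e
  have hmem : s + p • u ∈ (∑ t ∈ S, monomial t 1 * a t ^ p).support := by
    rw [mem_support_iff, coeff_add_smul_sum_monomial_mul_pow p hS a hs]
    exact pow_ne_zero _ (mem_support_iff.1 hu)
  rw [totalDegreeValuation_apply (mul_ne_zero (by simp) (pow_ne_zero _ has)),
    totalDegreeValuation_apply (ne_zero_iff.2 ⟨_, mem_support_iff.1 hmem⟩), WithZero.exp_le_exp,
    Nat.cast_le]
  calc (monomial s 1 * a s ^ p).totalDegree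
      ≤ s.degree + p * (a s).totalDegree :=
        (totalDegree_mul _ _).trans (add_le_add (totalDegree_monomial_le _ _) (totalDegree_pow _ _))
    _ = (s + p • u).degree := by
      rw [map_add, map_nsmul, smul_eq_mul, totalDegree, hdeg]; rfl
    _ ≤ _ := le_totalDegree hmem

theorem eq_C_of_isIntegral {σ R : Type*} [CommRing R] [IsDomain R] {z : MvPolynomial σ R}
    (hz : IsIntegral R z) : ∃ c, z = C c := by
  obtain ⟨q, hq, hqz⟩ := hz
  have hv : totalDegreeValuation σ R z ≤ 1 := by
    refine valuation_le_of_isRoot _ (G := q.map C) le_rfl (by simp [hq.map C]) (fun i => ?_) ?_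
    · rw [Polynomial.coeff_map]
      rcases eq_or_ne (q.coeff i) 0 with h | h
      · simp [h]
      · simp [totalDegreeValuation_apply (C_ne_zero.2 h)]
    · rwa [Polynomial.IsRoot.def, Polynomial.eval_map]
  rcases eq_or_ne z 0 with rfl | hz0
  · exact ⟨0, C_0.symm⟩
  rw [totalDegreeValuation_apply hz0, ← WithZero.exp_zero, WithZero.exp_le_exp] at hv
  exact ⟨_, totalDegree_eq_zero_iff_eq_C.1 (by omega)⟩

end Polynomials

section FiniteExtensions

open IntermediateField Polynomial

variable {K L ι : Type*} [Field K] [Field L] [Algebra K L] {y : ι → L}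
  (hy : adjoin K (Set.range y) = ⊤) {G : ι → K[X]} (hG : ∀ j, G j ≠ 0)
  (hGy : ∀ j, aeval (y j) (G j) = 0)

include hy hG hGy

theorem isSeparable_of_adjoin_eq_top_of_natDegree_lt (p : ℕ) [CharP K p]
    (hdeg : ∀ j, (G j).natDegree < p) : Algebra.IsSeparable K L := by
  have : Algebra.IsSeparable K (adjoin K (Set.range y)) := by
    rw [isSeparable_adjoin_iff_isSeparable]
    rintro _ ⟨j, rfl⟩
    have integral : IsIntegral K (y j) := IsAlgebraic.isIntegral ⟨G j, hG j, hGy j⟩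
    rcases separable_or p (minpoly.irreducible integral) with h | ⟨_, g, hg, he⟩
    · exact h
    · have := natDegree_le_of_dvd (minpoly.dvd K _ (hGy j)) (hG j)
      rw [← he, natDegree_expand] at this
      exact absurd (this.trans_lt (hdeg j))
        (Nat.le_mul_of_pos_left p hg.natDegree_pos).not_gt
  rw [hy] at this
  exact AlgEquiv.Algebra.isSeparable topEquiv

theorem finrank_le_pow_of_adjoin_eq_top [Fintype ι] [FiniteDimensional K L]
    [Algebra.IsSeparable K L] {s : ℕ} (hdeg : ∀ j, (G j).natDegree ≤ s) :
    Module.finrank K L ≤ s ^ Fintype.card ι := by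
  classical
  let Ω := AlgebraicClosure K
  let images (φ : L →ₐ[K] Ω) (j : ι) : ((G j).aroots Ω).toFinset :=
    ⟨φ (y j), by
      rw [Multiset.mem_toFinset, mem_aroots]
      exact ⟨hG j, by rw [aeval_algHom_apply, hGy, map_zero]⟩⟩
  have algebra_adjoin : Algebra.adjoin K (Set.range y) = ⊤ := by
    rw [← adjoin_toSubalgebra_of_isAlgebraic fun z _ => Algebra.IsAlgebraic.isAlgebraic z, hy,
      top_toSubalgebra]
  have images_injective : Function.Injective images := fun φ ψ h =>
    AlgHom.ext_of_adjoin_eq_top algebra_adjoin (by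
      rintro _ ⟨j, rfl⟩
      exact congrArg Subtype.val (congrFun h j))
  calc Module.finrank K L = Fintype.card (L →ₐ[K] Ω) := (AlgHom.card K L Ω).symm
    _ ≤ Fintype.card (∀ j, ((G j).aroots Ω).toFinset) :=
      Fintype.card_le_of_injective images images_injective
    _ = ∏ j, ((G j).aroots Ω).toFinset.card := by simp
    _ ≤ s ^ Fintype.card ι := Finset.prod_le_pow_card _ _ _ fun j _ =>
      (Multiset.toFinset_card_le _).trans <| (card_roots' _).trans <|
        natDegree_map_le.trans (hdeg j)

end FiniteExtensions

section ConjugateNorm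

variable {K L Ω Γ : Type*} [Field K] [Field L] [Field Ω] [Algebra K L] [Algebra K Ω]
  [FiniteDimensional K L] [LinearOrderedCommGroupWithZero Γ]

/-- The largest absolute value `v (σ z)` of a conjugate of `z : L`, over all `K`-embeddings
`σ : L → Ω`. It is submultiplicative and nonarchimedean, but not multiplicative in general. -/
noncomputable def conjugateNorm (K : Type*) {L Ω Γ : Type*} [Field K] [Field L] [Field Ω]
    [Algebra K L] [Algebra K Ω] [FiniteDimensional K L] [LinearOrderedCommGroupWithZero Γ]
    (v : Valuation Ω Γ) (z : L) : Γ :=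
  Finset.univ.sup fun σ : L →ₐ[K] Ω => v (σ z)

variable (v : Valuation Ω Γ)

theorem conjugateNorm_le_iff {z : L} {c : Γ} :
    conjugateNorm K v z ≤ c ↔ ∀ σ : L →ₐ[K] Ω, v (σ z) ≤ c := by
  simp [conjugateNorm]

theorem valuation_le_conjugateNorm (σ : L →ₐ[K] Ω) (z : L) : v (σ z) ≤ conjugateNorm K v z :=
  (conjugateNorm_le_iff v).1 le_rfl σ

theorem conjugateNorm_zero : conjugateNorm K v (0 : L) = 0 :=
  le_zero_iff.1 ((conjugateNorm_le_iff v).2 fun σ => by simp)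

theorem conjugateNorm_add_le (z w : L) :
    conjugateNorm K v (z + w) ≤ max (conjugateNorm K v z) (conjugateNorm K v w) :=
  (conjugateNorm_le_iff v).2 fun σ => by
    rw [map_add]
    exact (v.map_add _ _).trans
      (max_le_max (valuation_le_conjugateNorm v σ z) (valuation_le_conjugateNorm v σ w))

theorem conjugateNorm_neg (z : L) : conjugateNorm K v (-z) = conjugateNorm K v z := by
  simp [conjugateNorm]

theorem conjugateNorm_mul_le (z w : L) :
    conjugateNorm K v (z * w) ≤ conjugateNorm K v z * conjugateNorm K v w :=
  (conjugateNorm_le_iff v).2 fun σ => by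
    rw [map_mul, map_mul]
    exact mul_le_mul' (valuation_le_conjugateNorm v σ z) (valuation_le_conjugateNorm v σ w)

theorem conjugateNorm_algebraMap_le {R : Type*} [CommRing R] [Algebra R K] [Algebra R L]
    [Algebra R Ω] [IsScalarTower R K L] [IsScalarTower R K Ω] (a : R) :
    conjugateNorm K v (algebraMap R L a) ≤ v (algebraMap R Ω a) :=
  (conjugateNorm_le_iff v).2 fun σ => by
    rw [IsScalarTower.algebraMap_apply R K L, σ.commutes, ← IsScalarTower.algebraMap_apply]

theorem conjugateNorm_le_of_isRoot {G : Polynomial K} {c : Γ} (hc : 1 ≤ c)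
    (hlead : 1 ≤ v (algebraMap K Ω G.leadingCoeff))
    (hcoeff : ∀ i, v (algebraMap K Ω (G.coeff i)) ≤ c) {z : L} (hz : Polynomial.aeval z G = 0) :
    conjugateNorm K v z ≤ c :=
  (conjugateNorm_le_iff v).2 fun σ => by
    refine valuation_le_of_isRoot v (G := G.map (algebraMap K Ω)) hc (by simpa using hlead)
      (by simpa using hcoeff) ?_
    rw [Polynomial.IsRoot.def, Polynomial.eval_map_algebraMap, Polynomial.aeval_algHom_apply, hz,
      map_zero]

variable [IsAlgClosed Ω]

theorem exists_conjugateNorm_eq (z : L) : ∃ σ : L →ₐ[K] Ω, conjugateNorm K v z = v (σ z) := by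
  have : Nonempty (L →ₐ[K] Ω) := ⟨IsAlgClosed.lift⟩
  obtain ⟨σ, -, hσ⟩ := Finset.exists_mem_eq_sup Finset.univ Finset.univ_nonempty
    fun σ : L →ₐ[K] Ω => v (σ z)
  exact ⟨σ, hσ⟩

theorem conjugateNorm_ne_zero {z : L} (hz : z ≠ 0) : conjugateNorm K v z ≠ 0 := by
  obtain ⟨σ, hσ⟩ := exists_conjugateNorm_eq (K := K) v z
  rw [hσ]
  simpa using hz

theorem valuation_coeff_minpoly_le {z : L} {c : Γ} (hc : 1 ≤ c) (hz : conjugateNorm K v z ≤ c)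
    (i : ℕ) : v (algebraMap K Ω ((minpoly K z).coeff i)) ≤ c ^ Module.finrank K L := by
  have integral : IsIntegral K z := Algebra.IsIntegral.isIntegral z
  have root_le : ∀ r ∈ (minpoly K z).aroots Ω, v r ≤ c := fun r hr => by
    have : r ∈ (minpoly K z).rootSet Ω := Polynomial.mem_rootSet.2 (Polynomial.mem_aroots.1 hr)
    rw [← Algebra.IsAlgebraic.range_eval_eq_rootSet_minpoly Ω z] at this
    obtain ⟨σ, rfl⟩ := this
    exact (valuation_le_conjugateNorm v σ z).trans hz
  have factorization := (IsAlgClosed.splits ((minpoly K z).map (algebraMap K Ω))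
    ).eq_prod_roots_of_monic ((minpoly.monic integral).map _)
  rw [← Polynomial.coeff_map, factorization]
  refine (valuation_coeff_prod_X_sub_C_le v hc _ root_le i).trans (pow_le_pow_right₀ hc ?_)
  exact (Polynomial.card_roots' _).trans
    (Polynomial.natDegree_map_le.trans (minpoly.natDegree_le z))

end ConjugateNorm

section SumOfConjugates

variable {R K L Ω : Type*} [CommRing R] [Field K] [Field L] [Field Ω] [Algebra R K] [Algebra R L]
  [Algebra R Ω] [Algebra K L] [Algebra K Ω] [IsScalarTower R K L] [IsScalarTower R K Ω]
  [FiniteDimensional K L]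

theorem exists_algebraMap_eq_sum_embeddings [IsDomain R] [IsIntegrallyClosed R]
    [IsFractionRing R K] [Algebra.IsSeparable K L] [IsAlgClosed Ω] {z : L} (hz : IsIntegral R z) :
    ∃ t : R, algebraMap R Ω t = ∑ σ : L →ₐ[K] Ω, σ z := by
  obtain ⟨t, ht⟩ := IsIntegrallyClosed.isIntegral_iff.1 (Algebra.isIntegral_trace (L := K) hz)
  exact ⟨t, by rw [IsScalarTower.algebraMap_apply R K Ω, ht, trace_eq_sum_embeddings]⟩

theorem algebraMap_sum_mul_pow_eq_sum_embeddings (p : ℕ) [ExpChar Ω p] {ι : Type*}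
    (S : Finset ι) (m T : ι → R) (g : ι → L) (w : L)
    (hT : ∀ t, algebraMap R Ω (T t) = ∑ σ : L →ₐ[K] Ω, σ (g t * w)) :
    algebraMap R Ω (∑ t ∈ S, m t * T t ^ p) =
      ∑ σ : L →ₐ[K] Ω, σ ((∑ t ∈ S, algebraMap R L (m t) * g t ^ p) * w ^ p) := by
  have map_m (σ : L →ₐ[K] Ω) (t : ι) : σ (algebraMap R L (m t)) = algebraMap R Ω (m t) := by
    rw [IsScalarTower.algebraMap_apply R K L, σ.commutes, ← IsScalarTower.algebraMap_apply]
  simp only [map_sum, map_mul, map_pow, hT, map_m, Finset.sum_mul, sum_pow_char, Finset.mul_sum,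
    mul_pow, mul_assoc]
  exact Finset.sum_comm

theorem exists_valuation_sum_embeddings_pow_succ_eq [Algebra.IsSeparable K L] [IsAlgClosed Ω]
    (A : ValuationSubring Ω) (p : ℕ) [Fact p.Prime] [CharP Ω p] (hp : Module.finrank K L < p)
    {z : L} (hz : z ≠ 0) :
    ∃ j : ℕ, A.valuation (∑ σ : L →ₐ[K] Ω, σ (z ^ (j + 1))) =
      conjugateNorm K A.valuation z ^ (j + 1) := by
  obtain ⟨τ, hτ⟩ := exists_conjugateNorm_eq (K := K) A.valuation z
  obtain ⟨j, hj⟩ := exists_valuation_sum_pow_succ_eq A p (by rwa [AlgHom.card K L Ω])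
    (fun σ : L →ₐ[K] Ω => σ z) (s₀ := τ) (by simpa using hz)
    fun σ => hτ ▸ valuation_le_conjugateNorm A.valuation σ z
  exact ⟨j, by simpa only [map_pow, hτ] using hj⟩

end SumOfConjugates

section ConjugateNormAtInfinity

open MvPolynomial

theorem isIntegral_of_totalDegree_coeff_minpoly_eq_zero {σ k B : Type*} [CommRing k]
    [Nontrivial k] [CommRing B] [Algebra k B] [Algebra (MvPolynomial σ k) B]
    [IsScalarTower k (MvPolynomial σ k) B] {z : B} (hz : IsIntegral (MvPolynomial σ k) z)
    (hcoeff : ∀ l, ((minpoly (MvPolynomial σ k) z).coeff l).totalDegree = 0) : IsIntegral k z := by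
  have lifts : minpoly (MvPolynomial σ k) z ∈ Polynomial.lifts (C : k →+* MvPolynomial σ k) :=
    (Polynomial.lifts_iff_coeff_lifts _).2 fun l =>
      ⟨_, (totalDegree_eq_zero_iff_eq_C.1 (hcoeff l)).symm⟩
  obtain ⟨q, hq, -, hmonic⟩ :=
    Polynomial.lifts_and_degree_eq_and_monic lifts (minpoly.monic hz)
  refine ⟨q, hmonic, ?_⟩
  rw [← Polynomial.aeval_def, ← Polynomial.aeval_map_algebraMap (MvPolynomial σ k), algebraMap_eq,
    hq, minpoly.aeval]

variable {σ k K L Ω : Type*} [Field k] [Field K] [Field L] [Field Ω]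
  [Algebra (MvPolynomial σ k) K] [Algebra (MvPolynomial σ k) L] [Algebra (MvPolynomial σ k) Ω]
  [Algebra K L] [Algebra K Ω] [IsScalarTower (MvPolynomial σ k) K L]
  [IsScalarTower (MvPolynomial σ k) K Ω] [IsFractionRing (MvPolynomial σ k) K]
  [FiniteDimensional K L] [IsAlgClosed Ω] {A : ValuationSubring Ω}

-- Multiplying by a suitable power `w` of `g s` and taking traces down to the polynomial ring, one
-- reduces to `totalDegreeValuation_le_sum_monomial_mul_pow`; the power is chosen such that the
-- conjugates of `g s * w` of maximal valuation do not cancel in the trace.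
theorem valuation_monomial_mul_conjugateNorm_pow_le [Algebra.IsSeparable K L] (p : ℕ)
    [Fact p.Prime] [CharP k p] (hp : Module.finrank K L < p)
    (hA : (A.valuation.comap (algebraMap (MvPolynomial σ k) Ω)).IsEquiv (totalDegreeValuation σ k))
    {S : Finset (σ →₀ ℕ)} (hS : ∀ s ∈ S, ∀ i, s i < p) {g : (σ →₀ ℕ) → L}
    (hg : ∀ t, IsIntegral (MvPolynomial σ k) (g t)) {s : σ →₀ ℕ} (hs : s ∈ S) :
    A.valuation (algebraMap (MvPolynomial σ k) Ω (monomial s 1)) *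
        conjugateNorm K A.valuation (g s) ^ p ≤
      conjugateNorm K A.valuation
        (∑ t ∈ S, algebraMap (MvPolynomial σ k) L (monomial t 1) * g t ^ p) := by
  have : CharP Ω p := charP_of_injective_ringHom
    (f := (algebraMap (MvPolynomial σ k) Ω).comp C) (RingHom.injective _) p
  rcases eq_or_ne (g s) 0 with hgs | hgs
  · simp [hgs, conjugateNorm_zero, (Fact.out : p.Prime).ne_zero]
  set N := conjugateNorm K (L := L) A.valuation
  set y := ∑ t ∈ S, algebraMap (MvPolynomial σ k) L (monomial t 1) * g t ^ p
  have pos : 0 < N (g s) := zero_lt_iff.2 (conjugateNorm_ne_zero _ hgs)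
  obtain ⟨j, hj⟩ := exists_valuation_sum_embeddings_pow_succ_eq (Ω := Ω) A p hp hgs
  choose T hT using fun t => exists_algebraMap_eq_sum_embeddings (K := K) (Ω := Ω)
    ((hg t).mul ((hg s).pow j))
  have valuation_T : A.valuation (algebraMap _ Ω (T s)) = N (g s) ^ (j + 1) := by
    rw [hT]
    simpa only [← pow_succ'] using hj
  have valuation_sum_le :
      A.valuation (algebraMap _ Ω (∑ t ∈ S, monomial t 1 * T t ^ p)) ≤ N y * (N (g s) ^ j) ^ p := by
    rw [algebraMap_sum_mul_pow_eq_sum_embeddings p S _ T g _ hT]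
    refine Valuation.map_sum_le _ fun τ' _ => ?_
    rw [map_mul, map_mul, map_pow, map_pow, map_pow, map_pow]
    gcongr <;> exact valuation_le_conjugateNorm A.valuation τ' _
  refine le_of_mul_le_mul_right ?_ (pow_pos (pow_pos pos j) p)
  calc A.valuation (algebraMap _ Ω (monomial s (1 : k))) * N (g s) ^ p * (N (g s) ^ j) ^ p
      = A.valuation (algebraMap _ Ω (monomial s 1 * T s ^ p)) := by
        rw [map_mul, map_mul, map_pow, map_pow, valuation_T, mul_assoc, ← mul_pow, pow_succ']
    _ ≤ A.valuation (algebraMap _ Ω (∑ t ∈ S, monomial t 1 * T t ^ p)) :=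
        (hA _ _).2 (totalDegreeValuation_le_sum_monomial_mul_pow p hS T hs)
    _ ≤ N y * (N (g s) ^ j) ^ p := valuation_sum_le

theorem totalDegree_coeff_minpoly_eq_zero (p r : ℕ) (hp : r * Module.finrank K L < p)
    (hA : (A.valuation.comap (algebraMap (MvPolynomial σ k) Ω)).IsEquiv (totalDegreeValuation σ k))
    (i : σ) {z : L} (hz : IsIntegral (MvPolynomial σ k) z)
    (hnorm : conjugateNorm K A.valuation z ^ p ≤
      A.valuation (algebraMap (MvPolynomial σ k) Ω (X i)) ^ r) (l : ℕ) :
    ((minpoly (MvPolynomial σ k) z).coeff l).totalDegree = 0 := by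
  set a := (minpoly (MvPolynomial σ k) z).coeff l
  set γ := A.valuation (algebraMap (MvPolynomial σ k) Ω (X i))
  have hγ : 1 < γ := one_lt_valuation_X hA i
  by_contra hdeg
  have ha0 : a ≠ 0 := fun h => hdeg (by simp [h])
  have γ_le : γ ≤ A.valuation (algebraMap _ Ω a) := by
    have := valuation_eq_pow_totalDegree hA i ha0
    rw [Valuation.comap_apply, Valuation.comap_apply] at this
    rw [this]
    exact le_self_pow₀ hγ.le hdeg
  set c := max 1 (conjugateNorm K A.valuation z)
  have c_pow_le : c ^ p ≤ γ ^ r := by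
    rcases max_choice 1 (conjugateNorm K A.valuation z) with h | h
    · simpa only [c, h, one_pow] using one_le_pow₀ hγ.le
    · simpa only [c, h] using hnorm
  have coeff_le : A.valuation (algebraMap _ Ω a) ≤ c ^ Module.finrank K L := by
    have := valuation_coeff_minpoly_le (K := K) A.valuation (le_max_left _ _)
      (le_max_right 1 (conjugateNorm K A.valuation z)) l
    rwa [minpoly.isIntegrallyClosed_eq_field_fractions' K hz, Polynomial.coeff_map,
      ← IsScalarTower.algebraMap_apply] at this
  have : γ ^ p ≤ γ ^ (r * Module.finrank K L) := calc
    γ ^ p ≤ (c ^ Module.finrank K L) ^ p := pow_le_pow_left' (γ_le.trans coeff_le) p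
    _ = (c ^ p) ^ Module.finrank K L := by rw [← pow_mul, ← pow_mul, mul_comm]
    _ ≤ (γ ^ r) ^ Module.finrank K L := pow_le_pow_left' c_pow_le _
    _ = γ ^ (r * Module.finrank K L) := (pow_mul _ _ _).symm
  exact hp.not_ge ((pow_le_pow_iff_right₀ hγ).1 this)

end ConjugateNormAtInfinity

section NormAtInfinity

open MvPolynomial

/-- A norm measuring the growth at infinity of the elements of an extension
`f : MvPolynomial σ k → Q` generated by `x`, with `γ` the size of a polynomial of degree one. It is
submultiplicative, the generators have size at most `γ ^ r`, the monomials with exponents less than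
`p` are orthogonal over the `p`-th powers (`norm_orthogonal`), and the elements of small norm are
constant (`isIntegral_of_norm_pow_le`). -/
structure NormAtInfinity {σ k Q : Type*} [CommRing k] [CommRing Q] [Algebra k Q] (p r : ℕ)
    (f : MvPolynomial σ k →ₐ[k] Q) (x : σ → Q) (Γ : Type*) [LinearOrderedCommGroupWithZero Γ] where
  norm : Q → Γ
  γ : Γ
  one_lt_γ : 1 < γ
  norm_zero : norm 0 = 0
  norm_ne_zero : ∀ z, z ≠ 0 → norm z ≠ 0
  norm_add_le : ∀ z w, norm (z + w) ≤ max (norm z) (norm w)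
  norm_neg : ∀ z, norm (-z) = norm z
  norm_mul_le : ∀ z w, norm (z * w) ≤ norm z * norm w
  norm_algebraMap_le_one : ∀ c : k, norm (algebraMap k Q c) ≤ 1
  norm_monomial_le : ∀ s : σ →₀ ℕ, norm (f (monomial s 1)) ≤ γ ^ s.degree
  norm_gen_le : ∀ j, norm (x j) ≤ γ ^ r
  norm_orthogonal : ∀ S : Finset (σ →₀ ℕ), (∀ s ∈ S, ∀ i, s i < p) → ∀ g : (σ →₀ ℕ) → Q, ∀ s ∈ S,
    γ ^ s.degree * norm (g s) ^ p ≤ norm (∑ t ∈ S, f (monomial t 1) * g t ^ p)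
  isIntegral_of_norm_pow_le : ∀ z, norm z ^ p ≤ γ ^ r → IsIntegral k z

theorem adjoin_range_algebraMap_eq_top {k P K Q L ι : Type*} [CommRing k] [CommRing P]
    [CommRing Q] [IsDomain Q] [Field K] [Field L] [Algebra k P] [Algebra k Q] [Algebra P Q]
    [Algebra P K] [Algebra P L] [Algebra Q L] [Algebra K L] [IsScalarTower k P Q]
    [IsScalarTower P Q L] [IsScalarTower P K L] [IsFractionRing Q L] {x : ι → Q}
    (hx : Algebra.adjoin k (Set.range x) = ⊤) :
    IntermediateField.adjoin K (Set.range fun j => algebraMap Q L (x j)) = ⊤ := by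
  set E := IntermediateField.adjoin K (Set.range fun j => algebraMap Q L (x j))
  have algebraMap_mem (z : Q) : algebraMap Q L z ∈ E := by
    have hz : z ∈ Algebra.adjoin k (Set.range x) := hx ▸ Algebra.mem_top
    induction hz using Algebra.adjoin_induction with
    | mem z hz =>
      obtain ⟨j, rfl⟩ := hz
      exact IntermediateField.subset_adjoin K _ ⟨j, rfl⟩
    | algebraMap c =>
      rw [IsScalarTower.algebraMap_apply k P Q, ← IsScalarTower.algebraMap_apply,
        IsScalarTower.algebraMap_apply P K L]
      exact E.algebraMap_mem _
    | add z w _ _ hz hw => exact map_add (algebraMap Q L) z w ▸ add_mem hz hw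
    | mul z w _ _ hz hw => exact map_mul (algebraMap Q L) z w ▸ mul_mem hz hw
  refine eq_top_iff.2 fun z _ => ?_
  obtain ⟨a, b, -, rfl⟩ := IsFractionRing.div_surjective Q z
  exact div_mem (algebraMap_mem a) (algebraMap_mem b)

section OfValuation

variable {σ k Q K L Ω : Type*} [Field k] [CommRing Q] [IsDomain Q] [Field K] [Field L] [Field Ω]
  [Algebra k Q] [Algebra (MvPolynomial σ k) Q] [Algebra (MvPolynomial σ k) K]
  [Algebra (MvPolynomial σ k) L] [Algebra (MvPolynomial σ k) Ω] [Algebra Q L] [Algebra K L]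
  [Algebra K Ω] [IsScalarTower k (MvPolynomial σ k) Q] [IsScalarTower (MvPolynomial σ k) Q L]
  [IsScalarTower (MvPolynomial σ k) K L] [IsScalarTower (MvPolynomial σ k) K Ω]
  [IsFractionRing (MvPolynomial σ k) K] [IsFractionRing Q L]
  [Algebra.IsIntegral (MvPolynomial σ k) Q] [FiniteDimensional K L] [IsAlgClosed Ω]

/-- The conjugate norm on `Q ⊆ L` as a norm at infinity, for a valuation of `Ω` extending the
degree valuation on polynomials. -/
noncomputable def conjugateNormAtInfinity [Algebra.IsSeparable K L] (p r : ℕ)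
    [Fact p.Prime] [CharP k p] (hp : Module.finrank K L < p)
    (hrp : r * Module.finrank K L < p) {A : ValuationSubring Ω}
    (hA : (A.valuation.comap (algebraMap (MvPolynomial σ k) Ω)).IsEquiv (totalDegreeValuation σ k))
    (i : σ) (x : σ → Q)
    (hx : ∀ j, conjugateNorm K A.valuation (algebraMap Q L (x j)) ≤
      A.valuation (algebraMap (MvPolynomial σ k) Ω (X i)) ^ r) :
    NormAtInfinity p r (IsScalarTower.toAlgHom k (MvPolynomial σ k) Q) x A.ValueGroup where
  norm z := conjugateNorm K A.valuation (algebraMap Q L z)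
  γ := A.valuation (algebraMap (MvPolynomial σ k) Ω (X i))
  one_lt_γ := one_lt_valuation_X hA i
  norm_zero := by rw [map_zero, conjugateNorm_zero]
  norm_ne_zero z hz := conjugateNorm_ne_zero _ (by simpa using hz)
  norm_add_le z w := by simpa only [map_add] using conjugateNorm_add_le _ _ _
  norm_neg z := by rw [map_neg, conjugateNorm_neg]
  norm_mul_le z w := by simpa only [map_mul] using conjugateNorm_mul_le _ _ _
  norm_algebraMap_le_one c := by
    rw [IsScalarTower.algebraMap_apply k (MvPolynomial σ k) Q, algebraMap_eq,
      ← IsScalarTower.algebraMap_apply]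
    exact (conjugateNorm_algebraMap_le A.valuation (C c)).trans
      (by simpa using valuation_le_pow_of_totalDegree_le hA i (totalDegree_C c).le)
  norm_monomial_le s := by
    rw [IsScalarTower.toAlgHom_apply, ← IsScalarTower.algebraMap_apply]
    exact (conjugateNorm_algebraMap_le A.valuation _).trans
      (valuation_le_pow_of_totalDegree_le hA i (totalDegree_monomial_le s 1))
  norm_gen_le := hx
  norm_orthogonal S hS g s hs := by
    have orthogonal := valuation_monomial_mul_conjugateNorm_pow_le p hp hA hS
      (fun t => (Algebra.IsIntegral.isIntegral (g t)).algebraMap (B := L)) hs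
    have valuation_monomial := valuation_eq_pow_totalDegree hA i
      (a := monomial s 1) (by simp)
    rw [totalDegree_monomial _ one_ne_zero] at valuation_monomial
    simp only [map_sum, map_mul, map_pow, IsScalarTower.toAlgHom_apply,
      ← IsScalarTower.algebraMap_apply]
    exact valuation_monomial ▸ orthogonal
  isIntegral_of_norm_pow_le z hz := by
    refine isIntegral_of_totalDegree_coeff_minpoly_eq_zero (σ := σ)
      (Algebra.IsIntegral.isIntegral z) fun l => ?_
    rw [← minpoly.algebraMap_eq (IsFractionRing.injective Q L)]
    exact totalDegree_coeff_minpoly_eq_zero p r hrp hA i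
      (Algebra.IsIntegral.isIntegral z).algebraMap hz l

variable (K L Ω)

include K L in
theorem exists_normAtInfinity_of_isFractionRing [Fintype σ] [Nonempty σ] {p r s : ℕ}
    [Fact p.Prime] [CharP k p] {x : σ → Q} (hx : Algebra.adjoin k (Set.range x) = ⊤)
    {G : σ → Polynomial (MvPolynomial σ k)} (hG : ∀ j, G j ≠ 0) (hdeg : ∀ j, (G j).natDegree ≤ s)
    (hcoeff : ∀ j l, ((G j).coeff l).totalDegree ≤ r)
    (hroot : ∀ j, Polynomial.aeval (x j) (G j) = 0) (hsp : s < p)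
    (hcard : s ^ Fintype.card σ < p) (hrcard : r * s ^ Fintype.card σ < p) :
    ∃ A : ValuationSubring Ω, Nonempty
      (NormAtInfinity p r (IsScalarTower.toAlgHom k (MvPolynomial σ k) Q) x A.ValueGroup) := by
  let P := MvPolynomial σ k
  have injK : Function.Injective (algebraMap P K) := IsFractionRing.injective P K
  have injΩ : Function.Injective (algebraMap P Ω) := by
    rw [IsScalarTower.algebraMap_eq P K Ω]
    exact (algebraMap K Ω).injective.comp injK
  have : CharP K p := charP_of_injective_ringHom
    (f := (algebraMap P K).comp C) (RingHom.injective _) p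
  have adjoin_eq_top : IntermediateField.adjoin K (Set.range fun j => algebraMap Q L (x j)) = ⊤ :=
    adjoin_range_algebraMap_eq_top (P := P) hx
  let GK (j : σ) : Polynomial K := (G j).map (algebraMap P K)
  have GK_ne_zero (j : σ) : GK j ≠ 0 := (Polynomial.map_ne_zero_iff injK).2 (hG j)
  have aeval_GK (j : σ) : Polynomial.aeval (algebraMap Q L (x j)) (GK j) = 0 := by
    rw [Polynomial.aeval_map_algebraMap, Polynomial.aeval_algebraMap_apply, hroot, map_zero]
  have natDegree_GK (j : σ) : (GK j).natDegree ≤ s := Polynomial.natDegree_map_le.trans (hdeg j)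
  have : Algebra.IsSeparable K L := isSeparable_of_adjoin_eq_top_of_natDegree_lt adjoin_eq_top
    GK_ne_zero aeval_GK p fun j => (natDegree_GK j).trans_lt hsp
  have finrank_le : Module.finrank K L ≤ s ^ Fintype.card σ :=
    finrank_le_pow_of_adjoin_eq_top adjoin_eq_top GK_ne_zero aeval_GK natDegree_GK
  obtain ⟨A, hA⟩ := exists_valuationSubring_comap_isEquiv_of_injective (totalDegreeValuation σ k)
    (fun a ha => by simp [totalDegreeValuation_apply ha]) (algebraMap P Ω) injΩ
  obtain ⟨i⟩ := ‹Nonempty σ›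
  have one_le_pow (l : ℕ) : 1 ≤ A.valuation (algebraMap P Ω (X i)) ^ l :=
    one_le_pow₀ (one_lt_valuation_X hA i).le
  refine ⟨A, ⟨conjugateNormAtInfinity (K := K) (L := L) p r (finrank_le.trans_lt hcard)
    ((Nat.mul_le_mul_left r finrank_le).trans_lt hrcard) hA i x fun j =>
      conjugateNorm_le_of_isRoot A.valuation (one_le_pow r) ?_ (fun l => ?_) (aeval_GK j)⟩⟩
  · rw [Polynomial.leadingCoeff_map_of_injective injK, ← IsScalarTower.algebraMap_apply]
    exact (one_le_pow _).trans_eq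
      (valuation_eq_pow_totalDegree hA i (Polynomial.leadingCoeff_ne_zero.2 (hG j))).symm
  · rw [Polynomial.coeff_map, ← IsScalarTower.algebraMap_apply]
    exact valuation_le_pow_of_totalDegree_le hA i (hcoeff j l)

end OfValuation

universe v w

theorem exists_normAtInfinity {σ : Type v} {k : Type w} {Q : Type*} [Fintype σ] [Nonempty σ]
    [Field k] [CommRing Q] [IsDomain Q] [Algebra k Q] {p r s : ℕ} [Fact p.Prime] [CharP k p]
    {f : MvPolynomial σ k →ₐ[k] Q} (hf : Function.Injective f)
    (hfin : (f : MvPolynomial σ k →+* Q).Finite) {x : σ → Q}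
    (hx : Algebra.adjoin k (Set.range x) = ⊤) {G : σ → Polynomial (MvPolynomial σ k)}
    (hG : ∀ j, G j ≠ 0) (hdeg : ∀ j, (G j).natDegree ≤ s)
    (hcoeff : ∀ j l, ((G j).coeff l).totalDegree ≤ r)
    (hroot : ∀ j, (G j).eval₂ (f : MvPolynomial σ k →+* Q) (x j) = 0) (hsp : s < p)
    (hcard : s ^ Fintype.card σ < p) (hrcard : r * s ^ Fintype.card σ < p) :
    ∃ (Γ : Type max v w) (_ : LinearOrderedCommGroupWithZero Γ),
      Nonempty (NormAtInfinity p r f x Γ) := by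
  let P := MvPolynomial σ k
  let : Algebra P Q := (f : P →+* Q).toAlgebra
  have : IsScalarTower k P Q := .of_algebraMap_eq fun c => (f.commutes c).symm
  have : Module.Finite P Q := hfin
  have : FaithfulSMul P Q := (faithfulSMul_iff_algebraMap_injective _ _).2 hf
  let : Algebra (FractionRing P) (FractionRing Q) := FractionRing.liftAlgebra P (FractionRing Q)
  obtain ⟨A, hA⟩ := exists_normAtInfinity_of_isFractionRing (FractionRing P) (FractionRing Q)
    (AlgebraicClosure (FractionRing P)) hx hG hdeg hcoeff hroot hsp hcard hrcard
  exact ⟨A.ValueGroup, inferInstance, hA⟩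

theorem exists_normAtInfinity_of_large_char (σ : Type v) [Finite σ] [Nonempty σ]
    {d : ℕ} (hd : 0 < d) : ∃ D r : ℕ, ∀ (k : Type w) [Field k] (p : ℕ) [Fact p.Prime] [CharP k p],
      D < p → ∀ f : MvPolynomial σ k →ₐ[k] MvPolynomial σ k,
        (f : MvPolynomial σ k →+* MvPolynomial σ k).Finite → (∀ i, (f (X i)).totalDegree ≤ d) →
        ∃ (Γ : Type max v w) (_ : LinearOrderedCommGroupWithZero Γ),
          Nonempty (NormAtInfinity p r f X Γ) := by
  cases nonempty_fintype σ
  set s := ((Fintype.card σ + 1) * d + 1) ^ Fintype.card σ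
  set r := (Fintype.card σ + 1) * s
  refine ⟨s + s ^ Fintype.card σ + r * s ^ Fintype.card σ, r, ?_⟩
  intro k _ p _ _ hp f hfin hdeg
  choose G hG hGdeg hGcoeff hGroot using fun j => exists_polynomial_relation le_rfl f hdeg
    (z := X j) ((totalDegree_X j).trans_le hd)
  exact exists_normAtInfinity (injective_of_finite_algHom f hfin) hfin adjoin_range_X hG hGdeg
    hGcoeff hGroot (by lia) (by lia) (by lia)

end NormAtInfinity

section CommutingElements

open MvPolynomial

variable {σ R B : Type*} [CommRing R] [Ring B] [Algebra R B]

open scoped IsMulCommutative in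
/-- Evaluation of polynomials at a family of pairwise commuting elements of a noncommutative
algebra. -/
noncomputable def commAeval (x : σ → B) (hx : ∀ i j, Commute (x i) (x j)) :
    MvPolynomial σ R →ₐ[R] B :=
  haveI : IsMulCommutative (Algebra.adjoin R (Set.range x)) :=
    Algebra.isMulCommutative_adjoin R (by rintro _ ⟨i, rfl⟩ _ ⟨j, rfl⟩; exact hx i j)
  (Algebra.adjoin R (Set.range x)).val.comp
    (aeval fun i => ⟨x i, Algebra.subset_adjoin ⟨i, rfl⟩⟩)

@[simp]
theorem commAeval_X (x : σ → B) (hx : ∀ i j, Commute (x i) (x j)) (i : σ) :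
    commAeval (R := R) x hx (X i) = x i := by
  simp [commAeval]

theorem commAeval_monomial_eq_prod_ofFn {n : ℕ} (x : Fin n → B) (hx : ∀ i j, Commute (x i) (x j))
    (u : Fin n →₀ ℕ) :
    commAeval x hx (monomial u (1 : R)) = (List.ofFn fun i => x i ^ u i).prod := by
  rw [monomial_eq, C_1, one_mul, Finsupp.prod_fintype _ _ (by simp), ← List.prod_ofFn,
    map_list_prod, List.map_ofFn]
  congr 2
  funext i
  simp

theorem pderiv_pderiv_comm (i j : σ) (q : MvPolynomial σ R) :
    pderiv i (pderiv j q) = pderiv j (pderiv i q) := by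
  classical
  suffices ⁅pderiv i, pderiv j⁆ = (0 : Derivation R (MvPolynomial σ R) (MvPolynomial σ R)) from
    sub_eq_zero.1 (by rw [← Derivation.commutator_apply, this, Derivation.zero_apply])
  refine derivation_ext fun l => ?_
  rw [Derivation.commutator_apply, pderiv_X, pderiv_X]
  simp only [Pi.single_apply]
  split_ifs <;> simp

end CommutingElements

namespace WeylAlgebra

open MvPolynomial

section Symbol

variable {R : Type*} [CommRing R] {n : ℕ}

/-- The generators `x_1, …, x_n, ∂_1, …, ∂_n` of the Weyl algebra as a single family. -/
noncomputable def gen (R : Type*) [CommRing R] {n : ℕ} : Fin n ⊕ Fin n → WeylAlgebra R n :=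
  Sum.elim (wX R) (wD R)

theorem commute_wX (i j : Fin n) : Commute (wX R i) (wX R j) := by
  simp only [commute_iff_eq, wX, ← map_mul]
  exact RingQuot.mkAlgHom_rel R (WeylRel.xx i j)

theorem commute_wD (i j : Fin n) : Commute (wD R i) (wD R j) := by
  simp only [commute_iff_eq, wD, ← map_mul]
  exact RingQuot.mkAlgHom_rel R (WeylRel.dd i j)

theorem wD_mul_wX (i j : Fin n) : wD R i * wX R j = wX R j * wD R i + if i = j then 1 else 0 := by
  have h := RingQuot.mkAlgHom_rel R (WeylRel.dx (R := R) i j)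
  rw [map_mul, map_add, map_mul, apply_ite (RingQuot.mkAlgHom R _), map_one, map_zero] at h
  exact h

theorem adjoin_range_gen : Algebra.adjoin R (Set.range (gen R (n := n))) = ⊤ := by
  have hgen : Set.range (gen R (n := n)) =
      RingQuot.mkAlgHom R (WeylRel R n) '' Set.range (FreeAlgebra.ι R) := by
    rw [← Set.range_comp]
    congr 1
    ext (i | i) <;> rfl
  rw [hgen, ← AlgHom.map_adjoin, FreeAlgebra.adjoin_range_ι, Algebra.map_top, AlgHom.range_eq_top]
  exact RingQuot.mkAlgHom_surjective R (WeylRel R n)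

theorem commute_algHom_of_commute_gen {B : Type*} [Ring B] [Algebra R B]
    {g : WeylAlgebra R n →ₐ[R] B} {b : B} (h : ∀ i, Commute (g (gen R i)) b)
    (a : WeylAlgebra R n) : Commute (g a) b := by
  have ha : a ∈ Algebra.adjoin R (Set.range (gen R)) := by simp [adjoin_range_gen]
  induction ha using Algebra.adjoin_induction with
  | mem a ha => obtain ⟨i, rfl⟩ := ha; exact h i
  | algebraMap c => rw [AlgHom.commutes]; exact Algebra.commute_algebraMap_left c b
  | add a a' _ _ ha ha' => rw [map_add]; exact ha.add_left ha'
  | mul a a' _ _ ha ha' => rw [map_mul]; exact ha.mul_left ha'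

/-- The images of the generators under `symbolRep`: `x_i` acts as multiplication by `x_i` and `∂_i`
as `∂/∂x_i + ξ_i`, where `ξ_i = X (.inr i)`. -/
noncomputable def symbolRepGen (R : Type*) [CommRing R] (n : ℕ) :
    Fin n ⊕ Fin n → Module.End R (MvPolynomial (Fin n ⊕ Fin n) R) :=
  Sum.elim (fun i => LinearMap.mulLeft R (X (.inl i)))
    (fun i => (pderiv (.inl i)).toLinearMap + LinearMap.mulLeft R (X (.inr i)))

/-- The action of the Weyl algebra on polynomials obtained by transporting left multiplication
along the identification of `x^u ∂^v` with the monomial `x^u ξ^v`. -/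
noncomputable def symbolRep (R : Type*) [CommRing R] (n : ℕ) :
    WeylAlgebra R n →ₐ[R] Module.End R (MvPolynomial (Fin n ⊕ Fin n) R) :=
  RingQuot.liftAlgHom R ⟨FreeAlgebra.lift R (symbolRepGen R n), by
    intro a b h
    refine LinearMap.ext fun q => ?_
    cases h with
    | xx i j => simp [symbolRepGen, mul_left_comm]
    | dd i j =>
      simp [symbolRepGen, pderiv_pderiv_comm (.inl i) (.inl j) q, pderiv_X]
      ring
    | dx i j =>
      by_cases hij : i = j <;> simp [symbolRepGen, pderiv_X, hij] <;> ring⟩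

theorem symbolRep_gen (i : Fin n ⊕ Fin n) : symbolRep R n (gen R i) = symbolRepGen R n i := by
  cases i <;> simp [symbolRep, gen, wX, wD]

theorem symbolRep_wX (i : Fin n) (q : MvPolynomial (Fin n ⊕ Fin n) R) :
    symbolRep R n (wX R i) q = X (.inl i) * q := by
  simpa [symbolRepGen, gen] using LinearMap.congr_fun (symbolRep_gen (.inl i)) q

theorem symbolRep_wD (i : Fin n) (q : MvPolynomial (Fin n ⊕ Fin n) R) :
    symbolRep R n (wD R i) q = pderiv (.inl i) q + X (.inr i) * q := by
  simpa [symbolRepGen, gen] using LinearMap.congr_fun (symbolRep_gen (.inr i)) q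

/-- The full symbol of a differential operator: the polynomial obtained from its expansion in the
standard monomials `x^u ∂^v` on replacing `∂` by `ξ`. -/
noncomputable def symbol (R : Type*) [CommRing R] (n : ℕ) :
    WeylAlgebra R n →ₗ[R] MvPolynomial (Fin n ⊕ Fin n) R :=
  (LinearMap.applyₗ (1 : MvPolynomial (Fin n ⊕ Fin n) R)).comp (symbolRep R n).toLinearMap

theorem symbol_apply (a : WeylAlgebra R n) : symbol R n a = symbolRep R n a 1 := rfl

@[simp]
theorem symbol_one : symbol R n 1 = 1 := by
  rw [symbol_apply, map_one (symbolRep R n), Module.End.one_apply]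

theorem symbol_mul (a b : WeylAlgebra R n) :
    symbol R n (a * b) = symbolRep R n a (symbol R n b) := by
  rw [symbol_apply, map_mul, Module.End.mul_apply, symbol_apply]

theorem symbolRep_algebraMap (c : R) (q : MvPolynomial (Fin n ⊕ Fin n) R) :
    symbolRep R n (algebraMap R _ c) q = C c * q := by
  rw [AlgHom.commutes, Module.algebraMap_end_apply, smul_eq_C_mul]

theorem symbol_wX_mul (i : Fin n) (a : WeylAlgebra R n) :
    symbol R n (wX R i * a) = X (.inl i) * symbol R n a := by
  rw [symbol_mul, symbolRep_wX]

theorem symbolRep_mul_X_inr (a : WeylAlgebra R n) (i : Fin n)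
    (q : MvPolynomial (Fin n ⊕ Fin n) R) :
    symbolRep R n a (X (.inr i) * q) = X (.inr i) * symbolRep R n a q := by
  refine LinearMap.congr_fun (commute_algHom_of_commute_gen (g := symbolRep R n)
    (b := LinearMap.mulLeft R (X (.inr i))) (fun j => LinearMap.ext fun q => ?_) a) q
  cases j with
  | inl j => simp [symbolRep_gen, symbolRepGen, mul_left_comm]
  | inr j => simp [symbolRep_gen, symbolRepGen, mul_left_comm, mul_add]

theorem symbol_mul_wD (a : WeylAlgebra R n) (i : Fin n) :
    symbol R n (a * wD R i) = X (.inr i) * symbol R n a := by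
  rw [symbol_mul, symbol_apply, symbolRep_wD, pderiv_one, zero_add, symbolRep_mul_X_inr,
    symbol_apply]

/-- The inner derivation dual to a generator, `[∂_i, ·]` for `x_i` and `[·, x_i]` for `∂_i`. -/
noncomputable def genDeriv (i : Fin n ⊕ Fin n) (a : WeylAlgebra R n) : WeylAlgebra R n :=
  Sum.elim (fun i => wD R i * a - a * wD R i) (fun i => a * wX R i - wX R i * a) i

theorem commute_symbolRep_wX_add_pderiv (a : WeylAlgebra R n) (i : Fin n) :
    Commute (symbolRep R n a) (symbolRep R n (wX R i) + (pderiv (.inr i)).toLinearMap) := by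
  refine commute_algHom_of_commute_gen (fun j => LinearMap.ext fun q => ?_) a
  rcases j with j | j
  · simp [gen, symbolRep_wX, mul_add, mul_left_comm]
  · by_cases hij : i = j <;>
      simp [gen, symbolRep_wX, symbolRep_wD, mul_add, pderiv_X, hij,
        pderiv_pderiv_comm (.inl j) (.inr _) q] <;> ring

theorem symbol_genDeriv (i : Fin n ⊕ Fin n) (a : WeylAlgebra R n) :
    symbol R n (genDeriv i a) = pderiv i (symbol R n a) := by
  cases i with
  | inl i =>
    rw [genDeriv, Sum.elim_inl, map_sub, symbol_mul_wD, symbol_mul, symbolRep_wD,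
      add_sub_cancel_right]
  | inr i =>
    have h := LinearMap.congr_fun (commute_symbolRep_wX_add_pderiv a i) 1
    simp only [Module.End.mul_apply, LinearMap.add_apply, Derivation.coeFn_coe, pderiv_one,
      add_zero, ← symbol_apply, ← symbol_mul] at h
    rw [genDeriv, Sum.elim_inr, map_sub, h, add_sub_cancel_left]

end Symbol

section StandardMonomials

variable {R : Type*} [CommRing R] {n : ℕ}

/-- The standard monomial `x^u ∂^v`, indexed by the joint exponent `s = (u, v)`. -/
noncomputable def mon (R : Type*) [CommRing R] {n : ℕ} (s : Fin n ⊕ Fin n →₀ ℕ) :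
    WeylAlgebra R n :=
  stdMon R (fun i => s (.inl i)) (fun i => s (.inr i))

@[simp]
theorem mon_zero : mon R (0 : Fin n ⊕ Fin n →₀ ℕ) = 1 := by
  simp [mon, stdMon, List.ofFn_const]

theorem mon_sumElim (u v : Fin n →₀ ℕ) :
    mon R (Finsupp.sumElim u v) =
      commAeval (wX R) commute_wX (monomial u (1 : R)) *
        commAeval (wD R) commute_wD (monomial v (1 : R)) := by
  simp only [commAeval_monomial_eq_prod_ofFn, mon, stdMon, Finsupp.sumElim_inl,
    Finsupp.sumElim_inr]

theorem exists_eq_sumElim (s : Fin n ⊕ Fin n →₀ ℕ) :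
    ∃ u v : Fin n →₀ ℕ, s = Finsupp.sumElim u v :=
  ⟨_, _, (Finsupp.sumFinsuppEquivProdFinsupp.symm_apply_apply s).symm⟩

theorem wX_mul_mon (i : Fin n) (s : Fin n ⊕ Fin n →₀ ℕ) :
    wX R i * mon R s = mon R (s + Finsupp.single (.inl i) 1) := by
  obtain ⟨u, v, rfl⟩ := exists_eq_sumElim s
  have hs : Finsupp.sumElim u v + Finsupp.single (.inl i) 1 =
      Finsupp.sumElim (u + Finsupp.single i 1) v := by
    ext (j | j) <;> simp [Finsupp.single_apply]
  rw [hs, mon_sumElim, mon_sumElim, monomial_add_single, pow_one, mul_comm (monomial u 1),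
    map_mul, commAeval_X, mul_assoc]

theorem mon_mul_wD (i : Fin n) (s : Fin n ⊕ Fin n →₀ ℕ) :
    mon R s * wD R i = mon R (s + Finsupp.single (.inr i) 1) := by
  obtain ⟨u, v, rfl⟩ := exists_eq_sumElim s
  have hs : Finsupp.sumElim u v + Finsupp.single (.inr i) 1 =
      Finsupp.sumElim u (v + Finsupp.single i 1) := by
    ext (j | j) <;> simp [Finsupp.single_apply]
  rw [hs, mon_sumElim, mon_sumElim, monomial_add_single, pow_one, map_mul, commAeval_X, mul_assoc]

/-- The linear map sending the monomial `x^u ξ^v` to the standard monomial `x^u ∂^v`. -/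
noncomputable def normalOrder (R : Type*) [CommRing R] (n : ℕ) :
    MvPolynomial (Fin n ⊕ Fin n) R →ₗ[R] WeylAlgebra R n :=
  (basisMonomials (Fin n ⊕ Fin n) R).constr R (mon R)

theorem normalOrder_monomial (s : Fin n ⊕ Fin n →₀ ℕ) (c : R) :
    normalOrder R n (monomial s c) = c • mon R s := by
  have h := (basisMonomials (Fin n ⊕ Fin n) R).constr_basis R (mon R) s
  rw [coe_basisMonomials] at h
  rw [← mul_one c, ← smul_eq_mul, ← smul_monomial, map_smul, normalOrder, h, smul_eq_mul, mul_one]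

theorem normalOrder_C (c : R) : normalOrder R n (C c) = algebraMap R _ c := by
  rw [C_apply, normalOrder_monomial, mon_zero, Algebra.algebraMap_eq_smul_one]

theorem normalOrder_mul_X_inl (q : MvPolynomial (Fin n ⊕ Fin n) R) (i : Fin n) :
    normalOrder R n (q * X (.inl i)) = wX R i * normalOrder R n q := by
  induction q using MvPolynomial.induction_on' with
  | monomial s c =>
    rw [X, monomial_mul, mul_one, normalOrder_monomial, normalOrder_monomial, mul_smul_comm,
      wX_mul_mon]
  | add q q' hq hq' => rw [add_mul, map_add, hq, hq', map_add, mul_add]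

theorem normalOrder_mul_X_inr (q : MvPolynomial (Fin n ⊕ Fin n) R) (i : Fin n) :
    normalOrder R n (q * X (.inr i)) = normalOrder R n q * wD R i := by
  induction q using MvPolynomial.induction_on' with
  | monomial s c =>
    rw [X, monomial_mul, mul_one, normalOrder_monomial, normalOrder_monomial, smul_mul_assoc,
      mon_mul_wD]
  | add q q' hq hq' => rw [add_mul, map_add, hq, hq', map_add, add_mul]

theorem symbol_normalOrder (q : MvPolynomial (Fin n ⊕ Fin n) R) :
    symbol R n (normalOrder R n q) = q := by
  induction q using MvPolynomial.induction_on with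
  | C c => rw [normalOrder_C, symbol_apply, symbolRep_algebraMap, mul_one]
  | add q q' hq hq' => rw [map_add, map_add, hq, hq']
  | mul_X q i hq =>
    cases i with
    | inl i => rw [normalOrder_mul_X_inl, symbol_wX_mul, hq, mul_comm]
    | inr i => rw [normalOrder_mul_X_inr, symbol_mul_wD, hq, mul_comm]

theorem wD_mul_normalOrder (i : Fin n) (q : MvPolynomial (Fin n ⊕ Fin n) R) :
    wD R i * normalOrder R n q = normalOrder R n (pderiv (.inl i) q + X (.inr i) * q) := by
  rw [map_add, mul_comm (X _), normalOrder_mul_X_inr]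
  induction q using MvPolynomial.induction_on with
  | C c => rw [pderiv_C, map_zero, zero_add, normalOrder_C, Algebra.commutes]
  | add q q' hq hq' => simp only [map_add, mul_add, add_mul, hq, hq']; abel
  | mul_X q j hq =>
    rw [pderiv_mul, map_add]
    cases j with
    | inl j =>
      rw [normalOrder_mul_X_inl, normalOrder_mul_X_inl, ← mul_assoc, wD_mul_wX, add_mul,
        mul_assoc, hq, mul_add, mul_assoc]
      by_cases hij : i = j
      · subst hij
        rw [if_pos rfl, pderiv_X_self, one_mul, mul_one]
        abel
      · rw [if_neg hij, pderiv_X_of_ne (by simpa using Ne.symm hij), zero_mul, mul_zero, map_zero]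
        abel
    | inr j =>
      rw [normalOrder_mul_X_inr, normalOrder_mul_X_inr, ← mul_assoc, hq, add_mul, mul_assoc,
        (commute_wD i j).eq, pderiv_X_of_ne (by simp), mul_zero, map_zero, add_zero, mul_assoc]

theorem mul_normalOrder (a : WeylAlgebra R n) (q : MvPolynomial (Fin n ⊕ Fin n) R) :
    a * normalOrder R n q = normalOrder R n (symbolRep R n a q) := by
  have ha : a ∈ Algebra.adjoin R (Set.range (gen R)) := by simp [adjoin_range_gen]
  induction ha using Algebra.adjoin_induction generalizing q with
  | mem a ha =>
    obtain ⟨i | i, rfl⟩ := ha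
    · rw [gen, Sum.elim_inl, symbolRep_wX, mul_comm (X _), normalOrder_mul_X_inl]
    · rw [gen, Sum.elim_inr, symbolRep_wD, wD_mul_normalOrder]
  | algebraMap c => rw [symbolRep_algebraMap, ← smul_eq_C_mul, map_smul, Algebra.smul_def]
  | add a b _ _ ha hb => rw [add_mul, ha, hb, ← map_add, map_add (symbolRep R n),
      LinearMap.add_apply]
  | mul a b _ _ ha hb => rw [mul_assoc, hb, ha, map_mul (symbolRep R n), Module.End.mul_apply]

theorem normalOrder_symbol (a : WeylAlgebra R n) : normalOrder R n (symbol R n a) = a := by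
  rw [symbol_apply, ← mul_normalOrder, ← C_1, normalOrder_C, map_one, mul_one]

theorem symbol_injective : Function.Injective (symbol R n) :=
  Function.LeftInverse.injective normalOrder_symbol

@[simp]
theorem symbol_mon (s : Fin n ⊕ Fin n →₀ ℕ) : symbol R n (mon R s) = monomial s 1 := by
  rw [← one_smul R (mon R s), ← normalOrder_monomial, symbol_normalOrder]

theorem sum_coeff_symbol_smul_mon (a : WeylAlgebra R n) :
    ∑ s ∈ (symbol R n a).support, coeff s (symbol R n a) • mon R s = a := by
  simp only [← normalOrder_monomial, ← map_sum, support_sum_monomial_coeff, normalOrder_symbol]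

end StandardMonomials

end WeylAlgebra

section Expand

open MvPolynomial

variable {σ R : Type*} [CommRing R] {q : MvPolynomial σ R}

theorem coeff_sub_single_pderiv {s : σ →₀ ℕ} {i : σ} (hsi : s i ≠ 0) (q : MvPolynomial σ R) :
    coeff (s - Finsupp.single i 1) (pderiv i q) = coeff s q * s i := by
  rw [coeff_pderiv, tsub_add_cancel_of_le (by simpa using Nat.one_le_iff_ne_zero.2 hsi),
    Finsupp.tsub_apply, Finsupp.single_eq_same, ← Nat.cast_succ, Nat.succ_eq_add_one,
    Nat.sub_add_cancel (Nat.one_le_iff_ne_zero.2 hsi)]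

variable [IsDomain R]

theorem dvd_of_pderiv_eq_zero_of_mem_support (p : ℕ) [CharP R p] {i : σ} (h : pderiv i q = 0)
    {s : σ →₀ ℕ} (hs : s ∈ q.support) : p ∣ s i := by
  by_cases hsi : s i = 0
  · simp [hsi]
  have hcoeff := congrArg (coeff (s - Finsupp.single i 1)) h
  rw [coeff_sub_single_pderiv hsi, coeff_zero] at hcoeff
  exact (CharP.cast_eq_zero_iff R p _).1
    ((mul_eq_zero.1 hcoeff).resolve_left (mem_support_iff.1 hs))

theorem exists_expand_eq_of_pderiv_eq_zero (p : ℕ) [CharP R p] (h : ∀ i, pderiv i q = 0) :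
    ∃ g, expand p g = q := by
  refine ⟨∑ s ∈ q.support, monomial (s.mapRange (· / p) (Nat.zero_div p)) (coeff s q), ?_⟩
  conv_rhs => rw [← support_sum_monomial_coeff q]
  rw [map_sum]
  refine Finset.sum_congr rfl fun s hs => ?_
  rw [expand_monomial]
  congr 2
  ext i
  simp [Nat.mul_div_cancel' (dvd_of_pderiv_eq_zero_of_mem_support p (h i) hs)]

end Expand

namespace WeylAlgebra

open MvPolynomial

section Center

variable {R : Type*} [CommRing R] {n : ℕ}

theorem exists_gen_mul_gen_eq (i j : Fin n ⊕ Fin n) :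
    ∃ c : R, gen R i * gen R j = gen R j * gen R i + algebraMap R _ c := by
  rcases i with i | i <;> rcases j with j | j <;> simp only [gen, Sum.elim_inl, Sum.elim_inr]
  · exact ⟨0, by rw [(commute_wX i j).eq, map_zero, add_zero]⟩
  · refine ⟨if j = i then -1 else 0, ?_⟩
    rw [wD_mul_wX]
    split_ifs <;> simp
  · refine ⟨if i = j then 1 else 0, ?_⟩
    rw [wD_mul_wX]
    split_ifs <;> simp
  · exact ⟨0, by rw [(commute_wD i j).eq, map_zero, add_zero]⟩

theorem pow_succ_mul_eq_of_mul_eq_add_algebraMap {A : Type*} [Ring A] [Algebra R A] {y z : A}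
    {c : R} (h : y * z = z * y + algebraMap R A c) (m : ℕ) :
    y ^ (m + 1) * z = z * y ^ (m + 1) + algebraMap R A ((m + 1 : ℕ) * c) * y ^ m := by
  induction m with
  | zero => simp [h]
  | succ m ih =>
    rw [pow_succ' _ (m + 1), mul_assoc, ih, mul_add, ← mul_assoc, h, ← mul_assoc y,
      ← Algebra.commutes _ y, mul_assoc (algebraMap R A _) y, ← pow_succ', add_mul,
      mul_assoc, ← pow_succ', add_assoc, ← add_mul, ← map_add]
    congr 3
    push_cast
    ring

variable (p : ℕ) [CharP R p]

theorem commute_gen_pow_char (i : Fin n ⊕ Fin n) (a : WeylAlgebra R n) :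
    Commute (gen R i ^ p) a := by
  refine (commute_algHom_of_commute_gen (g := AlgHom.id R _) (fun j => Commute.symm ?_) a).symm
  obtain ⟨c, hc⟩ := exists_gen_mul_gen_eq (R := R) i j
  rcases p with _ | p
  · simp
  · rw [commute_iff_eq, AlgHom.id_apply, pow_succ_mul_eq_of_mul_eq_add_algebraMap hc,
      CharP.cast_eq_zero, zero_mul, map_zero, zero_mul, add_zero]

/-- In characteristic `p`, the embedding of a polynomial ring as the center of the Weyl algebra,
sending the variables to the `p`-th powers of the generators. -/
noncomputable def centerHom (R : Type*) [CommRing R] (n p : ℕ) [CharP R p] :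
    MvPolynomial (Fin n ⊕ Fin n) R →ₐ[R] WeylAlgebra R n :=
  commAeval (fun i => gen R i ^ p) fun i _ => commute_gen_pow_char p i _

@[simp]
theorem centerHom_X (i : Fin n ⊕ Fin n) : centerHom R n p (X i) = gen R i ^ p :=
  commAeval_X _ _ i

theorem centerHom_C (c : R) : centerHom R n p (C c) = algebraMap R _ c :=
  (centerHom R n p).commutes c

theorem centerHom_commute (g : MvPolynomial (Fin n ⊕ Fin n) R) (a : WeylAlgebra R n) :
    Commute (centerHom R n p g) a := by
  induction g using MvPolynomial.induction_on with
  | C c => rw [centerHom_C]; exact Algebra.commute_algebraMap_left c a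
  | add g h hg hh => rw [map_add]; exact hg.add_left hh
  | mul_X g i hg => rw [map_mul, centerHom_X]; exact hg.mul_left (commute_gen_pow_char p i a)

theorem symbol_wX_pow_mul (i : Fin n) (m : ℕ) (a : WeylAlgebra R n) :
    symbol R n (wX R i ^ m * a) = X (.inl i) ^ m * symbol R n a := by
  induction m with
  | zero => simp
  | succ m ih => rw [pow_succ', mul_assoc, symbol_wX_mul, ih, pow_succ', mul_assoc]

theorem symbol_mul_wD_pow (i : Fin n) (m : ℕ) (a : WeylAlgebra R n) :
    symbol R n (a * wD R i ^ m) = X (.inr i) ^ m * symbol R n a := by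
  induction m with
  | zero => simp
  | succ m ih => rw [pow_succ, ← mul_assoc, symbol_mul_wD, ih, pow_succ', mul_assoc]

theorem symbol_centerHom_mul (g : MvPolynomial (Fin n ⊕ Fin n) R) (a : WeylAlgebra R n) :
    symbol R n (centerHom R n p g * a) = expand p g * symbol R n a := by
  induction g using MvPolynomial.induction_on generalizing a with
  | C c => rw [centerHom_C, symbol_mul, symbolRep_algebraMap, expand_C]
  | add g h hg hh => simp only [map_add, add_mul, hg, hh]
  | mul_X g i hg =>
    rw [map_mul (centerHom R n p), mul_assoc, hg, centerHom_X, map_mul (expand p), expand_X,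
      mul_assoc]
    congr 1
    cases i with
    | inl i => exact symbol_wX_pow_mul i p a
    | inr i => rw [(commute_gen_pow_char p _ a).eq]; exact symbol_mul_wD_pow i p a

theorem symbol_centerHom (g : MvPolynomial (Fin n ⊕ Fin n) R) :
    symbol R n (centerHom R n p g) = expand p g := by
  simpa using symbol_centerHom_mul p g 1

variable {p}

theorem centerHom_injective (hp : p ≠ 0) : Function.Injective (centerHom R n p) :=
  Function.Injective.of_comp (f := symbol R n) <| by
    simpa only [Function.comp_def, symbol_centerHom] using
      expand_injective (Nat.pos_of_ne_zero hp)

theorem eq_zero_of_centerHom_mul_eq_zero [IsDomain R] (hp : p ≠ 0)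
    {g : MvPolynomial (Fin n ⊕ Fin n) R} (hg : g ≠ 0) {a : WeylAlgebra R n}
    (h : centerHom R n p g * a = 0) : a = 0 := by
  have h' := symbol_centerHom_mul p g a
  rw [h, map_zero, zero_eq_mul, expand_eq_zero (Nat.pos_of_ne_zero hp)] at h'
  exact symbol_injective ((h'.resolve_left hg).trans (map_zero _).symm)

theorem exists_centerHom_eq_of_genDeriv_eq_zero [IsDomain R] (p : ℕ) [CharP R p]
    {a : WeylAlgebra R n} (h : ∀ i, genDeriv i a = 0) : ∃ g, centerHom R n p g = a := by
  obtain ⟨g, hg⟩ := exists_expand_eq_of_pderiv_eq_zero p (q := symbol R n a) fun i => by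
    rw [← symbol_genDeriv, h, map_zero]
  exact ⟨g, symbol_injective ((symbol_centerHom p g).trans hg)⟩

end Center

end WeylAlgebra

section TotalDegreeLT

open MvPolynomial

variable {σ R : Type*} [CommRing R] {s t : ℕ} {q r : MvPolynomial σ R}

/-- The polynomials of total degree strictly less than `s`; in particular only `0` for `s = 0`. -/
noncomputable def totalDegreeLT (σ R : Type*) [CommRing R] (s : ℕ) :
    Submodule R (MvPolynomial σ R) :=
  restrictSupport R {t | t.degree < s}

theorem mem_totalDegreeLT : q ∈ totalDegreeLT σ R s ↔ ∀ t ∈ q.support, t.degree < s :=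
  Iff.rfl

theorem totalDegreeLT_mono (h : s ≤ t) : totalDegreeLT σ R s ≤ totalDegreeLT σ R t :=
  fun _ hq => mem_totalDegreeLT.2 fun u hu => (mem_totalDegreeLT.1 hq u hu).trans_le h

theorem mul_mem_totalDegreeLT (hq : q ∈ totalDegreeLT σ R (s + 1)) (hr : r ∈ totalDegreeLT σ R t) :
    q * r ∈ totalDegreeLT σ R (s + t) := by
  classical
  refine mem_totalDegreeLT.2 fun u hu => ?_
  obtain ⟨a, ha, b, hb, rfl⟩ := Finset.mem_add.1 (support_mul q r hu)
  have hadeg := mem_totalDegreeLT.1 hq a ha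
  have hbdeg := mem_totalDegreeLT.1 hr b hb
  rw [map_add]
  lia

theorem monomial_mem_totalDegreeLT {u : σ →₀ ℕ} (h : u.degree < s) (c : R) :
    monomial u c ∈ totalDegreeLT σ R s := by
  refine mem_totalDegreeLT.2 fun t ht => ?_
  rwa [Finset.mem_singleton.1 (support_monomial_subset ht)]

theorem X_mem_totalDegreeLT (i : σ) : (X i : MvPolynomial σ R) ∈ totalDegreeLT σ R 2 :=
  monomial_mem_totalDegreeLT (by simp) 1

theorem pderiv_mem_totalDegreeLT (hq : q ∈ totalDegreeLT σ R (s + 1)) (i : σ) :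
    pderiv i q ∈ totalDegreeLT σ R s := by
  refine mem_totalDegreeLT.2 fun u hu => ?_
  rw [mem_support_iff, coeff_pderiv] at hu
  have hdeg := mem_totalDegreeLT.1 hq _ (mem_support_iff.2 (left_ne_zero_of_mul hu))
  simpa using hdeg

theorem self_mem_totalDegreeLT (q : MvPolynomial σ R) :
    q ∈ totalDegreeLT σ R (q.totalDegree + 1) :=
  mem_totalDegreeLT.2 fun _ ht => Nat.lt_succ_of_le (le_totalDegree ht)

theorem eq_zero_of_mem_totalDegreeLT_zero (hq : q ∈ totalDegreeLT σ R 0) : q = 0 := by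
  refine support_eq_empty.1 (Finset.eq_empty_of_forall_notMem fun t ht => ?_)
  exact (mem_totalDegreeLT.1 hq t ht).not_ge (Nat.zero_le _)

theorem totalDegree_le_of_mem_totalDegreeLT (hq : q ∈ totalDegreeLT σ R (s + 1)) :
    q.totalDegree ≤ s :=
  Finset.sup_le fun t ht => Nat.le_of_lt_succ (mem_totalDegreeLT.1 hq t ht)

end TotalDegreeLT

namespace WeylAlgebra

open MvPolynomial

section Bernstein

variable {R : Type*} [CommRing R] {n : ℕ} {s t : ℕ} {a b : WeylAlgebra R n}

/-- The Bernstein filtration: the elements of degree strictly less than `s`. -/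
noncomputable def bernstein (R : Type*) [CommRing R] (n s : ℕ) : Submodule R (WeylAlgebra R n) :=
  (totalDegreeLT (Fin n ⊕ Fin n) R s).comap (symbol R n)

theorem mem_bernstein : a ∈ bernstein R n s ↔ symbol R n a ∈ totalDegreeLT _ R s :=
  Iff.rfl

theorem bernstein_mono (h : s ≤ t) : bernstein R n s ≤ bernstein R n t :=
  Submodule.comap_mono (totalDegreeLT_mono h)

theorem mon_mem_bernstein {u : Fin n ⊕ Fin n →₀ ℕ} (h : u.degree < s) :
    mon R u ∈ bernstein R n s := by
  rw [mem_bernstein, symbol_mon]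
  exact monomial_mem_totalDegreeLT h 1

theorem symbolRep_mon_sub_mem (u : Fin n ⊕ Fin n →₀ ℕ) {q : MvPolynomial (Fin n ⊕ Fin n) R}
    (hq : q ∈ totalDegreeLT _ R (t + 1)) :
    symbolRep R n (mon R u) q - monomial u 1 * q ∈ totalDegreeLT _ R (u.degree + t) := by
  induction hu : u.degree generalizing u q with
  | zero =>
    rw [(Finsupp.degree_eq_zero_iff u).1 hu]
    simp
  | succ m ih =>
    obtain ⟨i, v, rfl⟩ : ∃ i v, u = v + Finsupp.single i 1 := by
      obtain ⟨i, hi⟩ := Finsupp.ne_iff.1 (mt (Finsupp.degree_eq_zero_iff u).2 (by lia))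
      exact ⟨i, _, (tsub_add_cancel_of_le
        (Finsupp.single_le_iff.2 (Nat.one_le_iff_ne_zero.2 hi))).symm⟩
    have hv : v.degree = m := by simpa using hu
    have hX (r) (hr : r ∈ totalDegreeLT (Fin n ⊕ Fin n) R (m + t)) :
        X i * r ∈ totalDegreeLT _ R (m + 1 + t) :=
      totalDegreeLT_mono (by lia) (mul_mem_totalDegreeLT (X_mem_totalDegreeLT i) hr)
    have hdiff := hX _ (ih v hq hv)
    rw [monomial_add_single, pow_one]
    cases i with
    | inl i =>
      rw [← wX_mul_mon, map_mul, Module.End.mul_apply, symbolRep_wX]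
      convert hdiff using 1
      ring
    | inr i =>
      have hderiv : pderiv (.inl i) q ∈ totalDegreeLT _ R (t + 1) :=
        totalDegreeLT_mono (by lia) (pderiv_mem_totalDegreeLT hq _)
      have hlow : monomial v 1 * pderiv (.inl i) q ∈ totalDegreeLT _ R (m + t) :=
        mul_mem_totalDegreeLT (monomial_mem_totalDegreeLT (by lia) 1)
          (pderiv_mem_totalDegreeLT hq _)
      have hsum := add_mem (totalDegreeLT_mono (by lia) (add_mem (ih v hderiv hv) hlow)) hdiff
      rw [← mon_mul_wD, map_mul, Module.End.mul_apply, symbolRep_wD, map_add, symbolRep_mul_X_inr]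
      convert hsum using 1
      ring

theorem symbolRep_sub_symbol_mul_mem (ha : a ∈ bernstein R n (s + 1))
    {q : MvPolynomial (Fin n ⊕ Fin n) R} (hq : q ∈ totalDegreeLT _ R (t + 1)) :
    symbolRep R n a q - symbol R n a * q ∈ totalDegreeLT _ R (s + t) := by
  have hsum : symbolRep R n a q - symbol R n a * q = ∑ u ∈ (symbol R n a).support,
      coeff u (symbol R n a) • (symbolRep R n (mon R u) q - monomial u 1 * q) := by
    conv_lhs => rw [← sum_coeff_symbol_smul_mon a]
    simp only [map_sum, map_smul, LinearMap.sum_apply, LinearMap.smul_apply, symbol_mon,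
      Finset.sum_mul, smul_mul_assoc, smul_sub, Finset.sum_sub_distrib]
  rw [hsum]
  refine sum_mem fun u hu => Submodule.smul_mem _ _ (totalDegreeLT_mono ?_
    (symbolRep_mon_sub_mem u hq))
  exact Nat.add_le_add_right (Nat.le_of_lt_succ (mem_totalDegreeLT.1 ha u hu)) t

theorem symbol_mul_sub_mem (ha : a ∈ bernstein R n (s + 1)) (hb : b ∈ bernstein R n (t + 1)) :
    symbol R n (a * b) - symbol R n a * symbol R n b ∈ totalDegreeLT _ R (s + t) := by
  rw [symbol_mul]
  exact symbolRep_sub_symbol_mul_mem ha hb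

theorem mul_mem_bernstein (ha : a ∈ bernstein R n (s + 1)) (hb : b ∈ bernstein R n (t + 1)) :
    a * b ∈ bernstein R n (s + t + 1) := by
  have h := add_mem (totalDegreeLT_mono (Nat.le_succ _) (symbol_mul_sub_mem ha hb))
    (mul_mem_totalDegreeLT ha hb)
  rwa [sub_add_cancel] at h

theorem commutator_mem_bernstein (ha : a ∈ bernstein R n (s + 1))
    (hb : b ∈ bernstein R n (t + 1)) : a * b - b * a ∈ bernstein R n (s + t) := by
  have h := sub_mem (symbol_mul_sub_mem ha hb) (add_comm t s ▸ symbol_mul_sub_mem hb ha)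
  rw [mem_bernstein, map_sub]
  convert h using 1
  ring

theorem pow_mem_bernstein (ha : a ∈ bernstein R n (s + 1)) (m : ℕ) :
    a ^ m ∈ bernstein R n (m * s + 1) := by
  induction m with
  | zero => simpa using mon_mem_bernstein (R := R) (n := n) (u := 0) (s := 1) (by simp)
  | succ m ih => rw [pow_succ, add_mul, one_mul]; exact mul_mem_bernstein ih ha

theorem symbol_pow_sub_mem (ha : a ∈ bernstein R n (s + 1)) (m : ℕ) :
    symbol R n (a ^ m) - symbol R n a ^ m ∈ totalDegreeLT _ R (m * s) := by
  induction m with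
  | zero => simp
  | succ m ih =>
    have hlow := mul_mem_totalDegreeLT ha ih
    rw [add_comm s] at hlow
    rw [pow_succ, pow_succ, add_mul, one_mul]
    convert add_mem (symbol_mul_sub_mem (pow_mem_bernstein ha m) ha) hlow using 1
    ring

theorem mon_pow_char_sub_mem_bernstein (p : ℕ) [CharP R p] (u : Fin n ⊕ Fin n →₀ ℕ) :
    mon R u ^ p - centerHom R n p (monomial u 1) ∈ bernstein R n (p * u.degree) := by
  have h := symbol_pow_sub_mem (mon_mem_bernstein (R := R) (Nat.lt_succ_self u.degree)) p
  rw [mem_bernstein, map_sub, symbol_centerHom, expand_monomial]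
  rwa [symbol_mon, monomial_pow, one_pow] at h

theorem span_stdMon_eq_bernstein (d : ℕ) :
    Submodule.span R {g | ∃ u v : Fin n → ℕ, (∑ i, u i) + (∑ i, v i) ≤ d ∧ g = stdMon R u v} =
      bernstein R n (d + 1) := by
  have hdeg (u : Fin n ⊕ Fin n →₀ ℕ) : ∑ i, u (.inl i) + ∑ i, u (.inr i) = u.degree := by
    rw [Finsupp.degree_eq_sum, Fintype.sum_sum_type]
  refine le_antisymm (Submodule.span_le.2 ?_) fun a ha => ?_
  · rintro _ ⟨u, v, huv, rfl⟩
    refine mon_mem_bernstein (u := Finsupp.equivFunOnFinite.symm (Sum.elim u v)) ?_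
    rw [← hdeg]
    exact Nat.lt_succ_of_le huv
  · rw [← sum_coeff_symbol_smul_mon a]
    refine sum_mem fun u hu => Submodule.smul_mem _ _ (Submodule.subset_span ⟨_, _, ?_, rfl⟩)
    rw [hdeg]
    exact Nat.le_of_lt_succ (mem_totalDegreeLT.1 ha u hu)

theorem mem_bernstein_of_wdeg_le {d : ℕ} (h : wdeg a ≤ d) : a ∈ bernstein R n (d + 1) := by
  simp only [wdeg, span_stdMon_eq_bernstein] at h
  have hne : {d | a ∈ bernstein R n (d + 1)}.Nonempty :=
    ⟨(symbol R n a).totalDegree, self_mem_totalDegreeLT _⟩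
  exact bernstein_mono (Nat.succ_le_succ h) (Nat.sInf_mem hne)

end Bernstein

end WeylAlgebra

section DegreeOfLT

open MvPolynomial

theorem exists_eq_nsmul_add_of_pos {σ : Type*} {p : ℕ} (hp : 0 < p) (s : σ →₀ ℕ) :
    ∃ q r : σ →₀ ℕ, (∀ i, r i < p) ∧ s = p • q + r := by
  refine ⟨s.mapRange (· / p) (Nat.zero_div p), s.mapRange (· % p) (Nat.zero_mod p),
    fun i => Nat.mod_lt _ hp, ?_⟩
  ext i
  simp [Nat.div_add_mod]

variable {σ S : Type*} [CommRing S] {p : ℕ} {h : MvPolynomial σ S}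

/-- The polynomials whose exponents in each single variable are strictly less than `p`. -/
noncomputable def degreeOfLT (σ S : Type*) [CommRing S] (p : ℕ) : Submodule S (MvPolynomial σ S) :=
  restrictSupport S {s | ∀ i, s i < p}

theorem mem_degreeOfLT : h ∈ degreeOfLT σ S p ↔ ∀ s ∈ h.support, ∀ i, s i < p :=
  Iff.rfl

theorem monomial_mem_degreeOfLT {s : σ →₀ ℕ} (hs : ∀ i, s i < p) (c : S) :
    monomial s c ∈ degreeOfLT σ S p :=
  (monomial_mem_restrictSupport S).2 (.inl hs)

theorem C_mem_degreeOfLT (hp : 0 < p) (c : S) : C c ∈ degreeOfLT σ S p :=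
  monomial_mem_degreeOfLT (fun _ => hp) c

theorem C_mul_mem_degreeOfLT (c : S) (hh : h ∈ degreeOfLT σ S p) : C c * h ∈ degreeOfLT σ S p := by
  rw [← smul_eq_C_mul]
  exact Submodule.smul_mem _ c hh

theorem map_mem_degreeOfLT {T : Type*} [CommRing T] (f : S →+* T) (hh : h ∈ degreeOfLT σ S p) :
    map f h ∈ degreeOfLT σ T p :=
  mem_degreeOfLT.2 fun s hs => mem_degreeOfLT.1 hh s (support_map_subset f h hs)

theorem pderiv_mem_degreeOfLT (hh : h ∈ degreeOfLT σ S p) (i : σ) :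
    pderiv i h ∈ degreeOfLT σ S p := by
  refine mem_degreeOfLT.2 fun t ht j => ?_
  rw [mem_support_iff, coeff_pderiv] at ht
  have hlt := mem_degreeOfLT.1 hh _ (mem_support_iff.2 (left_ne_zero_of_mul ht)) j
  exact (Nat.le_add_right _ _).trans_lt hlt

instance finite_degreeOfLT [Finite σ] : Module.Finite S (degreeOfLT σ S p) := by
  classical
  have hfin : {s : σ →₀ ℕ | ∀ i, s i < p}.Finite :=
    (Set.finite_Icc 0 (Finsupp.equivFunOnFinite.symm fun _ : σ => p)).subset
      fun s hs => ⟨zero_le, fun i => (hs i).le⟩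
  have := hfin.to_subtype
  exact Module.Finite.of_basis (basisRestrictSupport S _)

theorem isUnit_natCast_of_lt_char (k : Type*) [Field k] [CharP k p] [Algebra k S] {m : ℕ}
    (hm : m ≠ 0) (hmp : m < p) : IsUnit (m : S) := by
  have hk : (m : k) ≠ 0 := fun h0 =>
    hmp.not_ge (Nat.le_of_dvd (Nat.pos_of_ne_zero hm) ((CharP.cast_eq_zero_iff k p m).1 h0))
  simpa using hk.isUnit.map (algebraMap k S)

theorem exists_eq_C_mul_add_C_of_C_dvd_pderiv (k : Type*) [Field k] [CharP k p] [Algebra k S]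
    (hh : h ∈ degreeOfLT σ S p) {z : S} (hz : ∀ i, C z ∣ pderiv i h) :
    ∃ h' ∈ degreeOfLT σ S p, h = C z * h' + C (coeff 0 h) := by
  classical
  have hdvd : ∀ s ∈ h.support.erase 0, z ∣ coeff s h := fun s hs => by
    obtain ⟨hs0, hs⟩ := Finset.mem_erase.1 hs
    obtain ⟨i, hi⟩ := Finsupp.ne_iff.1 hs0
    have hzi := (C_dvd_iff_dvd_coeff _ _).1 (hz i) (s - Finsupp.single i 1)
    rw [coeff_sub_single_pderiv hi] at hzi
    exact (isUnit_natCast_of_lt_char k hi (mem_degreeOfLT.1 hh s hs i)).dvd_mul_right.1 hzi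
  choose! c hc using hdvd
  refine ⟨∑ s ∈ h.support.erase 0, monomial s (c s), sum_mem fun s hs =>
    monomial_mem_degreeOfLT (mem_degreeOfLT.1 hh s (Finset.mem_of_mem_erase hs)) _, ?_⟩
  have hsum : C z * ∑ s ∈ h.support.erase 0, monomial s (c s) =
      ∑ s ∈ h.support.erase 0, monomial s (coeff s h) := by
    rw [Finset.mul_sum]
    exact Finset.sum_congr rfl fun s hs => by rw [C_mul_monomial, ← hc s hs]
  rw [hsum, ← monomial_zero']
  conv_lhs => rw [← support_sum_monomial_coeff h]
  by_cases h0 : 0 ∈ h.support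
  · exact (Finset.sum_erase_add _ _ h0).symm
  · rw [Finset.erase_eq_of_notMem h0, notMem_support_iff.1 h0, monomial_zero, add_zero]

end DegreeOfLT

theorem exists_smul_mem_range_of_injective {R M : Type*} [CommRing R] [IsDomain R]
    [AddCommGroup M] [Module R M] [Module.Finite R M] {T : M →ₗ[R] M}
    (hT : Function.Injective T) (x : M) : ∃ z : R, z ≠ 0 ∧ z • x ∈ LinearMap.range T := by
  have hrank := rank_quotient_add_rank_of_isDomain (LinearMap.range T)
  rw [(LinearEquiv.ofInjective T hT).symm.rank_eq] at hrank
  have hzero : Module.rank R (M ⧸ LinearMap.range T) = 0 :=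
    Cardinal.eq_of_add_eq_add_right (hrank.trans (zero_add _).symm) (Module.rank_lt_aleph0 R M)
  obtain ⟨z, hz, hzx⟩ := rank_eq_zero_iff.1 hzero (Submodule.Quotient.mk x)
  exact ⟨z, hz, (Submodule.Quotient.mk_eq_zero _).1 hzx⟩

namespace WeylAlgebra

open MvPolynomial

section CentralCombination

variable {k : Type*} [Field k] {n : ℕ} (p : ℕ) [CharP k p]
  (φ : WeylAlgebra k n →ₐ[k] WeylAlgebra k n)

theorem genDeriv_mon (i : Fin n ⊕ Fin n) (s : Fin n ⊕ Fin n →₀ ℕ) :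
    genDeriv i (mon k s) = (s i : WeylAlgebra k n) * mon k (s - Finsupp.single i 1) := by
  apply symbol_injective
  rw [symbol_genDeriv, symbol_mon, pderiv_monomial, one_mul, ← nsmul_eq_mul, map_nsmul, symbol_mon,
    nsmul_eq_mul, ← map_natCast C, C_mul_monomial, mul_one]

theorem mon_nsmul_add (q r : Fin n ⊕ Fin n →₀ ℕ) :
    mon k (p • q + r) = centerHom k n p (monomial q 1) * mon k r := by
  apply symbol_injective
  rw [symbol_centerHom_mul, symbol_mon, symbol_mon, expand_monomial, monomial_mul, one_mul]

/-- The map `∑ c_s Y^s ↦ ∑ c_s φ(x^u ∂^v)`, where `s = (u, v)` and the coefficients `c_s` are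
regarded as elements of the center. -/
noncomputable def centralCombination :
    MvPolynomial (Fin n ⊕ Fin n) (MvPolynomial (Fin n ⊕ Fin n) k) →+ WeylAlgebra k n :=
  (Finsupp.liftAddHom fun s => (AddMonoidHom.mulRight (φ (mon k s))).comp
    (centerHom k n p).toRingHom.toAddMonoidHom).comp
      (basisMonomials (Fin n ⊕ Fin n) (MvPolynomial (Fin n ⊕ Fin n) k)).repr.toAddMonoidHom

variable {p φ}

theorem centralCombination_monomial (s : Fin n ⊕ Fin n →₀ ℕ)
    (c : MvPolynomial (Fin n ⊕ Fin n) k) :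
    centralCombination p φ (monomial s c) = centerHom k n p c * φ (mon k s) :=
  Finsupp.liftAddHom_apply_single _ _ _

theorem centralCombination_C (c : MvPolynomial (Fin n ⊕ Fin n) k) :
    centralCombination p φ (C c) = centerHom k n p c := by
  rw [C_apply, centralCombination_monomial, mon_zero, map_one, mul_one]

theorem centralCombination_C_mul (c : MvPolynomial (Fin n ⊕ Fin n) k)
    (h : MvPolynomial (Fin n ⊕ Fin n) (MvPolynomial (Fin n ⊕ Fin n) k)) :
    centralCombination p φ (C c * h) = centerHom k n p c * centralCombination p φ h := by
  induction h using MvPolynomial.induction_on' with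
  | monomial s d =>
    rw [C_mul_monomial, centralCombination_monomial, centralCombination_monomial, map_mul,
      mul_assoc]
  | add h h' hh hh' => rw [mul_add, map_add, map_add, hh, hh', mul_add]

theorem centralCombination_eq_sum
    (h : MvPolynomial (Fin n ⊕ Fin n) (MvPolynomial (Fin n ⊕ Fin n) k)) :
    centralCombination p φ h = ∑ s ∈ h.support, centerHom k n p (coeff s h) * φ (mon k s) := by
  conv_lhs => rw [← support_sum_monomial_coeff h, map_sum]
  exact Finset.sum_congr rfl fun s _ => centralCombination_monomial s _

theorem exists_centralCombination_id_eq (hp : 0 < p) (a : WeylAlgebra k n) :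
    ∃ h ∈ degreeOfLT _ _ p, centralCombination p (AlgHom.id k _) h = a := by
  suffices ha : a ∈ (degreeOfLT _ _ p).toAddSubgroup.map (centralCombination p (AlgHom.id k _)) from
    ha
  rw [← sum_coeff_symbol_smul_mon a]
  refine sum_mem fun s _ => ?_
  obtain ⟨q, r, hr, hs⟩ := exists_eq_nsmul_add_of_pos hp s
  refine ⟨monomial r (C (coeff s (symbol k n a)) * monomial q 1),
    monomial_mem_degreeOfLT hr _, ?_⟩
  rw [centralCombination_monomial, map_mul, centerHom_C, mul_assoc, AlgHom.id_apply,
    ← mon_nsmul_add, ← hs, Algebra.smul_def]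

section Derivations

variable (φ)

/-- The inner derivation `[φ(∂_i), ·]` or `[·, φ(x_i)]` dual to the image of a generator. -/
noncomputable def mapGenDeriv (i : Fin n ⊕ Fin n) : WeylAlgebra k n →+ WeylAlgebra k n :=
  Sum.elim
    (fun i => AddMonoidHom.mulLeft (φ (wD k i)) - AddMonoidHom.mulRight (φ (wD k i)))
    (fun i => AddMonoidHom.mulRight (φ (wX k i)) - AddMonoidHom.mulLeft (φ (wX k i))) i

theorem mapGenDeriv_map (i : Fin n ⊕ Fin n) (a : WeylAlgebra k n) :
    mapGenDeriv φ i (φ a) = φ (genDeriv i a) := by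
  cases i <;> simp [mapGenDeriv, genDeriv]

theorem mapGenDeriv_centerHom_mul (i : Fin n ⊕ Fin n) (g : MvPolynomial (Fin n ⊕ Fin n) k)
    (a : WeylAlgebra k n) :
    mapGenDeriv φ i (centerHom k n p g * a) = centerHom k n p g * mapGenDeriv φ i a := by
  cases i <;>
    simp [mapGenDeriv, mul_sub, mul_assoc, (centerHom_commute p g _).symm.left_comm]

theorem mapGenDeriv_centralCombination (i : Fin n ⊕ Fin n)
    (h : MvPolynomial (Fin n ⊕ Fin n) (MvPolynomial (Fin n ⊕ Fin n) k)) :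
    mapGenDeriv φ i (centralCombination p φ h) = centralCombination p φ (pderiv i h) := by
  induction h using MvPolynomial.induction_on' with
  | monomial s c =>
    rw [centralCombination_monomial, mapGenDeriv_centerHom_mul, mapGenDeriv_map, genDeriv_mon,
      pderiv_monomial, centralCombination_monomial, map_mul φ, map_mul (centerHom k n p),
      map_natCast, map_natCast, mul_assoc]
  | add h h' hh hh' => simp only [map_add, hh, hh']

end Derivations

theorem eq_zero_of_centralCombination_eq_zero (hp : p ≠ 0)
    {h : MvPolynomial (Fin n ⊕ Fin n) (MvPolynomial (Fin n ⊕ Fin n) k)}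
    (hh : h ∈ degreeOfLT _ _ p) (h0 : centralCombination p φ h = 0) : h = 0 := by
  have hdeg := self_mem_totalDegreeLT h
  generalize h.totalDegree + 1 = N at hdeg
  induction N generalizing h with
  | zero => exact eq_zero_of_mem_totalDegreeLT_zero hdeg
  | succ N ih =>
    have hderiv (i : Fin n ⊕ Fin n) : pderiv i h = 0 :=
      ih (pderiv_mem_degreeOfLT hh i)
        (by rw [← mapGenDeriv_centralCombination, h0, map_zero]) (pderiv_mem_totalDegreeLT hdeg i)
    obtain ⟨h', -, hC⟩ := exists_eq_C_mul_add_C_of_C_dvd_pderiv k hh (z := 0) (by simp [hderiv])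
    rw [C_0, zero_mul, zero_add] at hC
    rw [hC, centralCombination_C] at h0
    rw [hC, centerHom_injective hp (h0.trans (map_zero _).symm), C_0]

theorem centralCombination_injOn (hp : p ≠ 0) :
    Set.InjOn (centralCombination p φ)
      (degreeOfLT (Fin n ⊕ Fin n) (MvPolynomial (Fin n ⊕ Fin n) k) p) :=
  fun _ hh _ hh' heq => sub_eq_zero.1 <|
    eq_zero_of_centralCombination_eq_zero hp (sub_mem hh hh') (by rw [map_sub, heq, sub_self])

variable (φ)

theorem exists_centerHom_mul_eq_centralCombination (hp : p ≠ 0) (a : WeylAlgebra k n) :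
    ∃ z ≠ 0, ∃ h ∈ degreeOfLT _ _ p, centerHom k n p z * a = centralCombination p φ h := by
  let : Module (MvPolynomial (Fin n ⊕ Fin n) k) (WeylAlgebra k n) :=
    Module.compHom _ (centerHom k n p).toRingHom
  let combination (ψ : WeylAlgebra k n →ₐ[k] WeylAlgebra k n) :
      degreeOfLT (Fin n ⊕ Fin n) (MvPolynomial (Fin n ⊕ Fin n) k) p
        →ₗ[MvPolynomial (Fin n ⊕ Fin n) k] WeylAlgebra k n :=
    { toFun := fun h => centralCombination p ψ h
      map_add' := fun h h' => map_add _ h.1 h'.1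
      map_smul' := fun c h => by
        rw [Submodule.coe_smul, smul_eq_C_mul]
        exact centralCombination_C_mul c h.1 }
  have hinj ψ : Function.Injective (combination ψ) := fun h h' heq =>
    Subtype.ext (centralCombination_injOn hp h.2 h'.2 heq)
  have hsurj : Function.Surjective (combination (AlgHom.id k _)) := fun a => by
    obtain ⟨h, hh, ha⟩ := exists_centralCombination_id_eq (Nat.pos_of_ne_zero hp) a
    exact ⟨⟨h, hh⟩, ha⟩
  let coords := (LinearEquiv.ofBijective _ ⟨hinj _, hsurj⟩).symm
  obtain ⟨z, hz, h, hh⟩ := exists_smul_mem_range_of_injective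
    (T := coords.toLinearMap ∘ₗ combination φ) (coords.injective.comp (hinj φ)) (coords a)
  refine ⟨z, hz, h, h.2, ?_⟩
  rw [LinearMap.comp_apply, ← map_smul] at hh
  exact (coords.injective hh).symm

end CentralCombination

section Center

variable {k : Type*} [Field k] {n p : ℕ} [CharP k p]

theorem genDeriv_eq_zero_of_forall_commute {a : WeylAlgebra k n} (h : ∀ b, Commute a b)
    (i : Fin n ⊕ Fin n) : genDeriv i a = 0 := by
  cases i <;> simp [genDeriv, (h _).eq]

theorem exists_centerHom_eq_of_centerHom_mul_eq (hp : p ≠ 0) {a : WeylAlgebra k n}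
    {z c : MvPolynomial (Fin n ⊕ Fin n) k} (hz : z ≠ 0)
    (h : centerHom k n p z * a = centerHom k n p c) : ∃ g, centerHom k n p g = a := by
  refine exists_centerHom_eq_of_genDeriv_eq_zero p (genDeriv_eq_zero_of_forall_commute fun b => ?_)
  refine sub_eq_zero.1 (eq_zero_of_centerHom_mul_eq_zero hp hz ?_)
  rw [mul_sub, ← mul_assoc, h, (centerHom_commute p z _).eq, mul_assoc,
    ← (centerHom_commute p z a).eq, h, (centerHom_commute p c b).eq, sub_self]

end Center

section Endomorphism

variable {k : Type*} [Field k] {n p : ℕ} [CharP k p]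
  {φ : WeylAlgebra k n →ₐ[k] WeylAlgebra k n}

theorem commute_map_centerHom (φ : WeylAlgebra k n →ₐ[k] WeylAlgebra k n) (hp : p ≠ 0)
    (g : MvPolynomial (Fin n ⊕ Fin n) k) (a : WeylAlgebra k n) :
    Commute (φ (centerHom k n p g)) a := by
  obtain ⟨z, hz, h, -, ha⟩ := exists_centerHom_mul_eq_centralCombination φ hp a
  have hcomm : Commute (φ (centerHom k n p g)) (centerHom k n p z * a) := by
    rw [ha, centralCombination_eq_sum]
    exact Commute.sum_right _ _ _ fun s _ =>
      (centerHom_commute p _ _).symm.mul_right ((centerHom_commute p g _).map φ)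
  refine sub_eq_zero.1 (eq_zero_of_centerHom_mul_eq_zero hp hz ?_)
  rw [mul_sub, (centerHom_commute p z _).left_comm, hcomm.eq, mul_assoc, sub_self]

theorem exists_algHom_map_centerHom (φ : WeylAlgebra k n →ₐ[k] WeylAlgebra k n) (hp : p ≠ 0) :
    ∃ f : MvPolynomial (Fin n ⊕ Fin n) k →ₐ[k] MvPolynomial (Fin n ⊕ Fin n) k,
      φ.comp (centerHom k n p) = (centerHom k n p).comp f := by
  choose F hF using fun i => exists_centerHom_eq_of_genDeriv_eq_zero p
    (genDeriv_eq_zero_of_forall_commute (commute_map_centerHom φ hp (X i)))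
  exact ⟨aeval F, MvPolynomial.algHom_ext fun i => by simp [hF]⟩

theorem exists_centralCombination_eq_of_centerHom_mul_eq (hp : p ≠ 0) {a : WeylAlgebra k n}
    {z : MvPolynomial (Fin n ⊕ Fin n) k} (hz : z ≠ 0)
    {h : MvPolynomial (Fin n ⊕ Fin n) (MvPolynomial (Fin n ⊕ Fin n) k)}
    (hh : h ∈ degreeOfLT _ _ p) (ha : centerHom k n p z * a = centralCombination p φ h) :
    ∃ h' ∈ degreeOfLT _ _ p, centralCombination p φ h' = a := by
  have hdeg := self_mem_totalDegreeLT h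
  generalize h.totalDegree + 1 = N at hdeg
  induction N generalizing h a with
  | zero =>
    rw [eq_zero_of_mem_totalDegreeLT_zero hdeg, map_zero] at ha
    exact ⟨0, zero_mem _, by rw [map_zero, eq_zero_of_centerHom_mul_eq_zero hp hz ha]⟩
  | succ N ih =>
    have hderiv (i) : centerHom k n p z * mapGenDeriv φ i a =
        centralCombination p φ (pderiv i h) := by
      rw [← mapGenDeriv_centralCombination, ← ha, mapGenDeriv_centerHom_mul]
    have hdvd (i) : C z ∣ pderiv i h := by
      obtain ⟨q, hq, hqa⟩ := ih (pderiv_mem_degreeOfLT hh i) (hderiv i)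
        (pderiv_mem_totalDegreeLT hdeg i)
      refine ⟨q, centralCombination_injOn (φ := φ) hp (pderiv_mem_degreeOfLT hh i)
        (C_mul_mem_degreeOfLT z hq) ?_⟩
      rw [centralCombination_C_mul, hqa, hderiv]
    obtain ⟨h', hh', hsplit⟩ := exists_eq_C_mul_add_C_of_C_dvd_pderiv k hh hdvd
    obtain ⟨c, hc⟩ := exists_centerHom_eq_of_centerHom_mul_eq hp hz
      (a := a - centralCombination p φ h') (c := coeff 0 h) <| by
        rw [mul_sub, ha, ← centralCombination_C_mul, ← map_sub, ← centralCombination_C (φ := φ)]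
        congr 1
        exact sub_eq_of_eq_add' hsplit
    refine ⟨h' + C c, add_mem hh' (C_mem_degreeOfLT (Nat.pos_of_ne_zero hp) c), ?_⟩
    rw [map_add, centralCombination_C, hc, add_sub_cancel]

theorem exists_centralCombination_eq (φ : WeylAlgebra k n →ₐ[k] WeylAlgebra k n) (hp : p ≠ 0)
    (a : WeylAlgebra k n) : ∃ h ∈ degreeOfLT _ _ p, centralCombination p φ h = a := by
  obtain ⟨z, hz, h, hh, ha⟩ := exists_centerHom_mul_eq_centralCombination φ hp a
  exact exists_centralCombination_eq_of_centerHom_mul_eq hp hz hh ha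

variable {f : MvPolynomial (Fin n ⊕ Fin n) k →ₐ[k] MvPolynomial (Fin n ⊕ Fin n) k}
  (hf : φ.comp (centerHom k n p) = (centerHom k n p).comp f)

include hf

theorem map_centralCombination_id
    (h : MvPolynomial (Fin n ⊕ Fin n) (MvPolynomial (Fin n ⊕ Fin n) k)) :
    φ (centralCombination p (AlgHom.id k _) h) = centralCombination p φ (map f.toRingHom h) := by
  induction h using MvPolynomial.induction_on' with
  | monomial s c =>
    rw [centralCombination_monomial, map_mul, map_monomial, centralCombination_monomial]
    exact congrArg (· * _) (DFunLike.congr_fun hf c)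
  | add h h' hh hh' => simp only [map_add, hh, hh']

theorem injective_of_injective_on_center (hp : p ≠ 0) (hinj : Function.Injective f) :
    Function.Injective φ := by
  refine (injective_iff_map_eq_zero φ).2 fun a ha => ?_
  obtain ⟨h, hh, rfl⟩ := exists_centralCombination_id_eq (Nat.pos_of_ne_zero hp) a
  rw [map_centralCombination_id hf] at ha
  have h0 := eq_zero_of_centralCombination_eq_zero hp (map_mem_degreeOfLT _ hh) ha
  rw [map_injective f.toRingHom hinj (h0.trans (map_zero _).symm), map_zero]

theorem totalDegree_center_algHom_X_le (hp : p ≠ 0) {d : ℕ} (hd : weylHomDeg φ ≤ d)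
    (i : Fin n ⊕ Fin n) : (f (X i)).totalDegree ≤ d := by
  have hgen : φ (gen k i) ∈ bernstein k n (d + 1) := by
    refine mem_bernstein_of_wdeg_le (le_trans ?_ hd)
    cases i with
    | inl i => exact (le_max_left _ _).trans (Finset.le_sup
        (f := fun i => max (wdeg (φ (wX k i))) (wdeg (φ (wD k i)))) (Finset.mem_univ i))
    | inr i => exact (le_max_right _ _).trans (Finset.le_sup
        (f := fun i => max (wdeg (φ (wX k i))) (wdeg (φ (wD k i)))) (Finset.mem_univ i))
  have hpow : φ (gen k i) ^ p = centerHom k n p (f (X i)) := by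
    rw [← map_pow, ← centerHom_X]
    exact DFunLike.congr_fun hf (X i)
  have hdeg := pow_mem_bernstein hgen p
  rw [hpow, mem_bernstein, symbol_centerHom] at hdeg
  have hle := totalDegree_le_of_mem_totalDegreeLT hdeg
  rw [totalDegree_expand, mul_comm] at hle
  exact Nat.le_of_mul_le_mul_left hle (Nat.pos_of_ne_zero hp)

theorem submodule_eq_top_of_closure_eq_top (hp : p ≠ 0)
    (M : Submodule f.range (MvPolynomial (Fin n ⊕ Fin n) k)) {s : Set (WeylAlgebra k n)}
    (hs : AddSubgroup.closure {x | ∃ g ∈ s, ∃ a b, x = φ a * g * φ b} = ⊤)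
    (hM : ∀ g ∈ s, ∃ h ∈ coeffsIn (Fin n ⊕ Fin n) M, centralCombination p φ h = g) : M = ⊤ := by
  let G := (coeffsIn (Fin n ⊕ Fin n) M).toAddSubgroup ⊓ (degreeOfLT _ _ p).toAddSubgroup
  have hmul (c) (hc : c ∈ M) (b : WeylAlgebra k n) :
      centerHom k n p c * φ b ∈ G.map (centralCombination p φ) := by
    obtain ⟨h, hh, rfl⟩ := exists_centralCombination_id_eq (Nat.pos_of_ne_zero hp) b
    refine ⟨C c * map f.toRingHom h, ⟨fun t => ?_,
      C_mul_mem_degreeOfLT c (map_mem_degreeOfLT _ hh)⟩, ?_⟩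
    · rw [coeff_C_mul, coeff_map, mul_comm]
      exact M.smul_mem ⟨f (coeff t h), _, rfl⟩ hc
    · rw [centralCombination_C_mul, map_centralCombination_id hf]
  have htop : G.map (centralCombination p φ) = ⊤ := by
    rw [eq_top_iff, ← hs, AddSubgroup.closure_le]
    rintro _ ⟨g, hg, a, b, rfl⟩
    obtain ⟨h, hhM, rfl⟩ := hM g hg
    rw [centralCombination_eq_sum, Finset.mul_sum, Finset.sum_mul]
    refine sum_mem fun t _ => ?_
    rw [(centerHom_commute p _ _).symm.left_comm, mul_assoc, ← map_mul, ← map_mul]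
    exact hmul _ (hhM t) _
  refine eq_top_iff.2 fun c _ => ?_
  obtain ⟨h, ⟨hhM, hh⟩, hc⟩ : centerHom k n p c ∈ G.map (centralCombination p φ) := by
    rw [htop]; trivial
  rw [← centralCombination_C (φ := φ)] at hc
  have hC := centralCombination_injOn hp hh (C_mem_degreeOfLT (Nat.pos_of_ne_zero hp) c) hc
  exact C_mem_coeffsIn.1 (hC ▸ hhM)

theorem finite_center_algHom_of_fg_bimodule (hp : p ≠ 0) {s : Finset (WeylAlgebra k n)}
    (hs : AddSubgroup.closure {x | ∃ g ∈ s, ∃ a b, x = φ a * g * φ b} = ⊤) :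
    (f : MvPolynomial (Fin n ⊕ Fin n) k →+* MvPolynomial (Fin n ⊕ Fin n) k).Finite := by
  classical
  choose H hH using fun g => (exists_centralCombination_eq φ hp g).imp fun _ h => h.2
  let T := s.biUnion fun g => (H g).coeffs
  have htop : Submodule.span f.range (T : Set (MvPolynomial (Fin n ⊕ Fin n) k)) = ⊤ := by
    refine submodule_eq_top_of_closure_eq_top hf hp _ (s := s) hs
      fun g hg => ⟨H g, ?_, hH g⟩
    refine mem_coeffsIn_iff_coeffs_subset.2 fun c hc => ?_
    exact Submodule.subset_span (Finset.mem_biUnion.2 ⟨g, hg, hc⟩)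
  have hfin : (algebraMap f.range (MvPolynomial (Fin n ⊕ Fin n) k)).Finite :=
    RingHom.finite_algebraMap.2 ⟨⟨T, htop⟩⟩
  have hsurj : (f.rangeRestrict : MvPolynomial (Fin n ⊕ Fin n) k →+* f.range).Finite :=
    RingHom.Finite.of_surjective _ f.rangeRestrict_surjective
  rw [show (f : MvPolynomial (Fin n ⊕ Fin n) k →+* MvPolynomial (Fin n ⊕ Fin n) k) =
    (algebraMap f.range _).comp f.rangeRestrict from RingHom.ext fun _ => rfl]
  exact hfin.comp hsurj

end Endomorphism

end WeylAlgebra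

section AlmostCommFiltration

open Polynomial

variable {A : Type*} [Ring A] {G J : ℕ → AddSubgroup A}

/-- A multiplicative filtration `G` of a ring together with a family `J ≤ G`, absorbing products on
the left, which contains the commutators: the associated graded object `⨁ G i / J i` is a
commutative ring. -/
structure AlmostCommFiltration (G J : ℕ → AddSubgroup A) : Prop where
  one_mem : 1 ∈ G 0
  mul_mem : ∀ {i j a b}, a ∈ G i → b ∈ G j → a * b ∈ G (i + j)
  le : ∀ i, J i ≤ G i
  mul_mem_of_mem_right : ∀ {i j a b}, a ∈ G i → b ∈ J j → a * b ∈ J (i + j)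
  commutator_mem : ∀ {i j a b}, a ∈ G i → b ∈ G j → a * b - b * a ∈ J (i + j)

theorem forall_coeff_monomial_mem_iff {i : ℕ} {a : A} :
    (∀ j, (monomial i a).coeff j ∈ G j) ↔ a ∈ G i := by
  refine ⟨fun h => by simpa using h i, fun h j => ?_⟩
  rw [coeff_monomial]
  split_ifs with hij
  · exact hij ▸ h
  · exact zero_mem _

theorem forall_coeff_mul_mem {G' H : ℕ → AddSubgroup A} {q q' : A[X]}
    (hmul : ∀ {i j a b}, a ∈ G i → b ∈ G' j → a * b ∈ H (i + j))
    (hq : ∀ i, q.coeff i ∈ G i) (hq' : ∀ i, q'.coeff i ∈ G' i) (i : ℕ) :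
    (q * q').coeff i ∈ H i := by
  rw [coeff_mul]
  refine sum_mem fun x hx => ?_
  rw [← Finset.HasAntidiagonal.mem_antidiagonal.1 hx]
  exact hmul (hq _) (hq' _)

namespace AlmostCommFiltration

theorem mul_mem_of_mem_left (hG : AlmostCommFiltration G J) {i j : ℕ} {a b : A} (ha : a ∈ J i)
    (hb : b ∈ G j) : a * b ∈ J (i + j) := by
  have hba := hG.mul_mem_of_mem_right hb ha
  rw [add_comm] at hba
  simpa using add_mem (hG.commutator_mem (hG.le i ha) hb) hba

/-- The Rees ring `⨁ G i tⁱ`, as a subring of the polynomials in `t`. -/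
def rees (hG : AlmostCommFiltration G J) : Subring A[X] where
  carrier := {q | ∀ i, q.coeff i ∈ G i}
  zero_mem' i := zero_mem (G i)
  one_mem' := forall_coeff_monomial_mem_iff.2 hG.one_mem
  add_mem' {q q'} hq hq' i := coeff_add q q' i ▸ add_mem (hq i) (hq' i)
  neg_mem' {q} hq i := coeff_neg q i ▸ neg_mem (hq i)
  mul_mem' hq hq' := forall_coeff_mul_mem hG.mul_mem hq hq'

/-- The ideal `⨁ J i tⁱ` of the Rees ring. -/
noncomputable def reesIdeal (hG : AlmostCommFiltration G J) : TwoSidedIdeal hG.rees :=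
  .mk' {q | ∀ i, q.1.coeff i ∈ J i}
    (fun i => zero_mem (J i))
    (fun {q q'} hq hq' i => coeff_add q.1 q'.1 i ▸ add_mem (hq i) (hq' i))
    (fun {q} hq i => coeff_neg q.1 i ▸ neg_mem (hq i))
    (fun {q _} hq' => forall_coeff_mul_mem hG.mul_mem_of_mem_right q.2 hq')
    (fun {_ q'} hq => forall_coeff_mul_mem hG.mul_mem_of_mem_left hq q'.2)

theorem mem_reesIdeal (hG : AlmostCommFiltration G J) {q : hG.rees} :
    q ∈ hG.reesIdeal ↔ ∀ i, q.1.coeff i ∈ J i :=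
  TwoSidedIdeal.mem_mk' _ _ _ _ _ _ q

theorem add_pow_prime_sub_mem (hG : AlmostCommFiltration G J) {p : ℕ} (hp : p.Prime)
    (hpA : (p : A) = 0) {a b : A} (ha : a ∈ G 1) (hb : b ∈ G 1) :
    (a + b) ^ p - (a ^ p + b ^ p) ∈ J p := by
  let x : hG.rees := ⟨monomial 1 a, forall_coeff_monomial_mem_iff.2 ha⟩
  let y : hG.rees := ⟨monomial 1 b, forall_coeff_monomial_mem_iff.2 hb⟩
  let π := hG.reesIdeal.ringCon.mk'
  have π_eq_iff (u v : hG.rees) : π u = π v ↔ ∀ i, (u.1 - v.1).coeff i ∈ J i :=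
    (RingCon.eq _).trans ((TwoSidedIdeal.rel_iff _ u v).trans hG.mem_reesIdeal)
  have hcomm : Commute (π x) (π y) := by
    rw [commute_iff_eq, ← map_mul, ← map_mul, π_eq_iff]
    change ∀ i, (monomial 1 a * monomial 1 b - monomial 1 b * monomial 1 a).coeff i ∈ J i
    rw [monomial_mul_monomial, monomial_mul_monomial, ← map_sub, forall_coeff_monomial_mem_iff]
    exact hG.commutator_mem ha hb
  have hp0 : (p : hG.rees) = 0 :=
    Subtype.ext (by simpa [hpA] using (map_natCast (C : A →+* A[X]) p).symm)
  obtain ⟨r, hr⟩ := hcomm.exists_add_pow_prime_eq hp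
  rw [← map_natCast π, hp0, map_zero, zero_mul, zero_mul, zero_mul, add_zero, ← map_add, ← map_pow,
    ← map_pow, ← map_pow, ← map_add, π_eq_iff] at hr
  change ∀ i, ((monomial 1 a + monomial 1 b) ^ p
    - (monomial 1 a ^ p + monomial 1 b ^ p)).coeff i ∈ J i at hr
  simpa only [← map_add, ← map_sub, monomial_pow, one_mul, forall_coeff_monomial_mem_iff] using hr

theorem sum_pow_prime_sub_mem (hG : AlmostCommFiltration G J) {p : ℕ} (hp : p.Prime)
    (hpA : (p : A) = 0) {ι : Type*} {S : Finset ι} {a : ι → A} (ha : ∀ s ∈ S, a s ∈ G 1) :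
    (∑ s ∈ S, a s) ^ p - ∑ s ∈ S, a s ^ p ∈ J p := by
  induction S using Finset.cons_induction with
  | empty => simp [hp.ne_zero]
  | cons s S hs ih =>
    rw [Finset.forall_mem_cons] at ha
    rw [Finset.sum_cons, Finset.sum_cons]
    have hsplit := add_mem (hG.add_pow_prime_sub_mem hp hpA ha.1 (sum_mem ha.2)) (ih ha.2)
    rwa [add_comm (a s ^ p), sub_add_eq_sub_sub_swap, sub_add_sub_cancel, sub_sub] at hsplit

end AlmostCommFiltration

end AlmostCommFiltration

theorem map₂_mem_of_mem_closure {A B M : Type*} [AddGroup A] [AddGroup B] [AddCommGroup M]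
    (m : A →+ B →+ M) {S : Set A} {T : Set B} {H : AddSubgroup M}
    (hm : ∀ x ∈ S, ∀ y ∈ T, m x y ∈ H) {a : A} {b : B} (ha : a ∈ AddSubgroup.closure S)
    (hb : b ∈ AddSubgroup.closure T) : m a b ∈ H := by
  have hx (x) (hx : x ∈ S) : m x b ∈ H :=
    (AddSubgroup.closure_le (H.comap (m x))).2 (hm x hx) hb
  exact (AddSubgroup.closure_le (H.comap (m.flip b))).2 hx ha

namespace NormAtInfinity

open MvPolynomial

variable {σ k Q Γ : Type*} [CommRing k] [CommRing Q] [Algebra k Q]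
  [LinearOrderedCommGroupWithZero Γ] {p r : ℕ} {f : MvPolynomial σ k →ₐ[k] Q} {x : σ → Q}
  (N : NormAtInfinity p r f x Γ)

theorem γ_pos : 0 < N.γ :=
  zero_lt_one.trans N.one_lt_γ

theorem inv_γ_mul_lt {ρ : Γ} (hρ : 0 < ρ) : N.γ⁻¹ * ρ < ρ :=
  mul_lt_of_lt_one_left hρ (inv_lt_one_of_one_lt₀ N.one_lt_γ)

theorem inv_γ_mul_le (ρ : Γ) : N.γ⁻¹ * ρ ≤ ρ :=
  mul_le_of_le_one_left' (inv_lt_one_of_one_lt₀ N.one_lt_γ).le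

theorem norm_one_le : N.norm 1 ≤ 1 := by
  simpa using N.norm_algebraMap_le_one 1

theorem norm_pow_le (z : Q) (m : ℕ) : N.norm (z ^ m) ≤ N.norm z ^ m := by
  induction m with
  | zero => simpa using N.norm_one_le
  | succ m ih =>
    rw [pow_succ, pow_succ]
    exact (N.norm_mul_le _ _).trans (mul_le_mul' ih le_rfl)

theorem norm_le_max_norm_sub (z w : Q) : N.norm w ≤ max (N.norm z) (N.norm (z - w)) := by
  rw [← N.norm_neg (z - w)]
  simpa using N.norm_add_le z (-(z - w))

theorem γ_pow_add_mul_norm_mul_pow_le {s t : ℕ} {z w : Q} {ρ τ : Γ}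
    (hz : N.γ ^ s * N.norm z ^ p ≤ ρ) (hw : N.γ ^ t * N.norm w ^ p ≤ τ) :
    N.γ ^ (s + t) * N.norm (z * w) ^ p ≤ ρ * τ :=
  calc
    N.γ ^ (s + t) * N.norm (z * w) ^ p ≤ N.γ ^ (s + t) * (N.norm z * N.norm w) ^ p := by
      gcongr
      exact N.norm_mul_le z w
    _ = (N.γ ^ s * N.norm z ^ p) * (N.γ ^ t * N.norm w ^ p) := by
      rw [pow_add, mul_pow, mul_mul_mul_comm]
    _ ≤ ρ * τ := mul_le_mul' hz hw

theorem norm_smul_le (c : k) (z : Q) : N.norm (c • z) ≤ N.norm z := by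
  rw [Algebra.smul_def]
  exact (N.norm_mul_le _ _).trans (mul_le_of_le_one_left' (N.norm_algebraMap_le_one c))

/-- The polynomials over `Q` whose terms have order at most `ρ`, where a monomial of exponent `s`
has order `γ ^ s.degree` and a coefficient `z` has order `norm z ^ p`. -/
def coeffOrderLE (hp : p ≠ 0) (ρ : Γ) : AddSubgroup (MvPolynomial σ Q) where
  carrier := {h | ∀ s : σ →₀ ℕ, N.γ ^ s.degree * N.norm (coeff s h) ^ p ≤ ρ}
  zero_mem' s := by simp [N.norm_zero, hp]
  add_mem' {h h'} hh hh' s := by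
    rw [coeff_add]
    rcases le_max_iff.1 (N.norm_add_le (coeff s h) (coeff s h')) with hle | hle
    · exact (mul_le_mul' le_rfl (pow_le_pow_left' hle p)).trans (hh s)
    · exact (mul_le_mul' le_rfl (pow_le_pow_left' hle p)).trans (hh' s)
  neg_mem' {h} hh s := by
    rw [coeff_neg, N.norm_neg]
    exact hh s

theorem monomial_mem_coeffOrderLE (hp : p ≠ 0) {t : σ →₀ ℕ} {z : Q} {ρ : Γ}
    (hz : N.γ ^ t.degree * N.norm z ^ p ≤ ρ) : monomial t z ∈ N.coeffOrderLE hp ρ := by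
  classical
  intro s
  rw [coeff_monomial]
  split_ifs with hts
  · exact hts ▸ hz
  · simp [N.norm_zero, hp]

end NormAtInfinity

namespace WeylAlgebra

open MvPolynomial

section OrderFiltration

variable {k Γ : Type*} [Field k] [LinearOrderedCommGroupWithZero Γ] {n p r : ℕ} [CharP k p]
  {f : MvPolynomial (Fin n ⊕ Fin n) k →ₐ[k] MvPolynomial (Fin n ⊕ Fin n) k}
  {φ : WeylAlgebra k n →ₐ[k] WeylAlgebra k n} {N : NormAtInfinity p r f X Γ}
  {s : ℕ} {a b : WeylAlgebra k n} {z : MvPolynomial (Fin n ⊕ Fin n) k} {ρ τ : Γ}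

variable (φ N) in
/-- The elements of order at most `ρ` for the filtration of the Weyl algebra in which the image
under `φ` of an element of degree `s` has order `γ ^ s` and the element of the center given by `z`
has order `norm z ^ p`. Since that element is a polynomial in the `p`-th powers of the generators,
the exponent `p` makes the two orders agree on the center of the image of `φ`. -/
noncomputable def orderLE (ρ : Γ) : AddSubgroup (WeylAlgebra k n) :=
  AddSubgroup.closure {x | ∃ s, ∃ a ∈ bernstein k n (s + 1), ∃ z,
    N.γ ^ s * N.norm z ^ p ≤ ρ ∧ x = φ a * centerHom k n p z}

theorem map_mul_centerHom_mem_orderLE (ha : a ∈ bernstein k n (s + 1))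
    (hz : N.γ ^ s * N.norm z ^ p ≤ ρ) : φ a * centerHom k n p z ∈ orderLE φ N ρ :=
  AddSubgroup.subset_closure ⟨s, a, ha, z, hz, rfl⟩

theorem map_mul_centerHom_mem_orderLE_inv_γ_mul (ha : a ∈ bernstein k n s)
    (hz : N.γ ^ s * N.norm z ^ p ≤ ρ) : φ a * centerHom k n p z ∈ orderLE φ N (N.γ⁻¹ * ρ) := by
  cases s with
  | zero =>
    have ha0 : a = 0 :=
      symbol_injective ((eq_zero_of_mem_totalDegreeLT_zero ha).trans (map_zero _).symm)
    rw [ha0, map_zero, zero_mul]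
    exact zero_mem _
  | succ s =>
    refine map_mul_centerHom_mem_orderLE ha ?_
    rwa [le_inv_mul_iff₀ N.γ_pos, ← mul_assoc, ← pow_succ']

theorem orderLE_mono (h : ρ ≤ τ) : orderLE φ N ρ ≤ orderLE φ N τ :=
  AddSubgroup.closure_mono fun _ ⟨s, a, ha, z, hz, hx⟩ => ⟨s, a, ha, z, hz.trans h, hx⟩

theorem map_mul_centerHom_mul_map_mul_centerHom (a b : WeylAlgebra k n)
    (z w : MvPolynomial (Fin n ⊕ Fin n) k) :
    φ a * centerHom k n p z * (φ b * centerHom k n p w) = φ (a * b) * centerHom k n p (z * w) := by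
  rw [(centerHom_commute p z (φ b)).mul_mul_mul_comm, map_mul, map_mul]

theorem mul_mem_orderLE (ha : a ∈ orderLE φ N ρ) (hb : b ∈ orderLE φ N τ) :
    a * b ∈ orderLE φ N (ρ * τ) := by
  refine map₂_mem_of_mem_closure AddMonoidHom.mul ?_ ha hb
  rintro _ ⟨s, a, ha, z, hz, rfl⟩ _ ⟨t, b, hb, w, hw, rfl⟩
  rw [AddMonoidHom.mul_apply, map_mul_centerHom_mul_map_mul_centerHom]
  exact map_mul_centerHom_mem_orderLE (mul_mem_bernstein ha hb)
    (N.γ_pow_add_mul_norm_mul_pow_le hz hw)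

theorem commutator_mem_orderLE (ha : a ∈ orderLE φ N ρ) (hb : b ∈ orderLE φ N τ) :
    a * b - b * a ∈ orderLE φ N (N.γ⁻¹ * (ρ * τ)) := by
  refine map₂_mem_of_mem_closure (AddMonoidHom.mul - AddMonoidHom.mul.flip) ?_ ha hb
  rintro _ ⟨s, a, ha, z, hz, rfl⟩ _ ⟨t, b, hb, w, hw, rfl⟩
  rw [AddMonoidHom.sub_apply, AddMonoidHom.sub_apply, AddMonoidHom.flip_apply,
    AddMonoidHom.mul_apply, AddMonoidHom.mul_apply, map_mul_centerHom_mul_map_mul_centerHom,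
    map_mul_centerHom_mul_map_mul_centerHom, mul_comm w z, ← sub_mul, ← map_sub]
  exact map_mul_centerHom_mem_orderLE_inv_γ_mul (commutator_mem_bernstein ha hb)
    (N.γ_pow_add_mul_norm_mul_pow_le hz hw)

variable (φ N) in
theorem one_mem_orderLE : 1 ∈ orderLE φ N 1 := by
  have hmem : φ (mon k 0) * centerHom k n p 1 ∈ orderLE φ N 1 := by
    refine map_mul_centerHom_mem_orderLE (s := 0) (mon_mem_bernstein (by simp)) ?_
    rw [pow_zero, one_mul]
    exact pow_le_one' N.norm_one_le p
  rwa [mon_zero, map_one, map_one, mul_one] at hmem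

variable (φ N) in
theorem almostCommFiltration_orderLE (ρ : Γ) :
    AlmostCommFiltration (fun i => orderLE φ N (ρ ^ i)) fun i => orderLE φ N (N.γ⁻¹ * ρ ^ i) where
  one_mem := (pow_zero ρ).symm ▸ one_mem_orderLE φ N
  mul_mem ha hb := by
    rw [pow_add]
    exact mul_mem_orderLE ha hb
  le i := orderLE_mono (N.inv_γ_mul_le _)
  mul_mem_of_mem_right ha hb := by
    rw [pow_add, mul_left_comm]
    exact mul_mem_orderLE ha hb
  commutator_mem ha hb := by
    rw [pow_add]
    exact commutator_mem_orderLE ha hb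

theorem map_mon_mul_centerHom_mem_map_centralCombination
    (hf : φ.comp (centerHom k n p) = (centerHom k n p).comp f) (hp : p ≠ 0)
    {u : Fin n ⊕ Fin n →₀ ℕ} (hz : N.γ ^ u.degree * N.norm z ^ p ≤ ρ) :
    φ (mon k u) * centerHom k n p z ∈
      ((degreeOfLT _ _ p).toAddSubgroup ⊓ N.coeffOrderLE hp ρ).map (centralCombination p φ) := by
  obtain ⟨q, t, ht, rfl⟩ := exists_eq_nsmul_add_of_pos (Nat.pos_of_ne_zero hp) u
  refine ⟨monomial t (f (monomial q 1) * z),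
    ⟨monomial_mem_degreeOfLT ht _, N.monomial_mem_coeffOrderLE hp (le_trans ?_ hz)⟩, ?_⟩
  · calc
      N.γ ^ t.degree * N.norm (f (monomial q 1) * z) ^ p ≤
          N.γ ^ t.degree * (N.γ ^ q.degree * N.norm z) ^ p := by
        gcongr
        exact (N.norm_mul_le _ _).trans (mul_le_mul' (N.norm_monomial_le q) le_rfl)
      _ = N.γ ^ (p • q + t).degree * N.norm z ^ p := by
        rw [map_add, map_nsmul, smul_eq_mul, pow_add, mul_comm p, pow_mul, mul_pow, ← mul_assoc,
          mul_comm (N.γ ^ t.degree)]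
  · rw [centralCombination_monomial, mon_nsmul_add, map_mul φ,
      show φ (centerHom k n p _) = centerHom k n p (f _) from DFunLike.congr_fun hf _, map_mul,
      mul_assoc, mul_assoc, (centerHom_commute p z _).eq]

theorem orderLE_le_map_centralCombination
    (hf : φ.comp (centerHom k n p) = (centerHom k n p).comp f) (hp : p ≠ 0) (ρ : Γ) :
    orderLE φ N ρ ≤
      ((degreeOfLT _ _ p).toAddSubgroup ⊓ N.coeffOrderLE hp ρ).map (centralCombination p φ) := by
  refine (AddSubgroup.closure_le _).2 ?_
  rintro _ ⟨s, a, ha, z, hz, rfl⟩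
  rw [← sum_coeff_symbol_smul_mon a, map_sum, Finset.sum_mul]
  refine sum_mem fun u hu => ?_
  have hus : u.degree ≤ s := Nat.le_of_lt_succ (mem_totalDegreeLT.1 ha u hu)
  rw [map_smul, smul_mul_assoc, ← mul_smul_comm, ← map_smul]
  refine map_mon_mul_centerHom_mem_map_centralCombination hf hp (le_trans ?_ hz)
  gcongr
  · exact N.one_lt_γ.le
  · exact N.norm_smul_le _ z

theorem mem_coeffOrderLE_of_centralCombination_mem_orderLE
    (hf : φ.comp (centerHom k n p) = (centerHom k n p).comp f) (hp : p ≠ 0)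
    {h : MvPolynomial (Fin n ⊕ Fin n) (MvPolynomial (Fin n ⊕ Fin n) k)}
    (hh : h ∈ degreeOfLT _ _ p) (hρ : centralCombination p φ h ∈ orderLE φ N ρ) :
    h ∈ N.coeffOrderLE hp ρ := by
  obtain ⟨h', ⟨hh', hρ'⟩, heq⟩ := orderLE_le_map_centralCombination hf hp ρ hρ
  exact centralCombination_injOn hp hh' hh heq ▸ hρ'

theorem norm_pow_le_of_centerHom_mem_orderLE
    (hf : φ.comp (centerHom k n p) = (centerHom k n p).comp f) (hp : p ≠ 0)
    (hz : centerHom k n p z ∈ orderLE φ N ρ) : N.norm z ^ p ≤ ρ := by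
  rw [← centralCombination_C (φ := φ)] at hz
  simpa using mem_coeffOrderLE_of_centralCombination_mem_orderLE hf hp
    (C_mem_degreeOfLT (Nat.pos_of_ne_zero hp) z) hz 0

end OrderFiltration

section Surjectivity

variable {k Γ : Type*} [Field k] [LinearOrderedCommGroupWithZero Γ] {n p r : ℕ} [CharP k p]
  {f : MvPolynomial (Fin n ⊕ Fin n) k →ₐ[k] MvPolynomial (Fin n ⊕ Fin n) k}
  {φ : WeylAlgebra k n →ₐ[k] WeylAlgebra k n}
  (hf : φ.comp (centerHom k n p) = (centerHom k n p).comp f) (N : NormAtInfinity p r f X Γ)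

include hf

theorem centerHom_mul_map_mon_pow_sub_mem_orderLE {s : Fin n ⊕ Fin n →₀ ℕ}
    {z : MvPolynomial (Fin n ⊕ Fin n) k} {ρ : Γ} (hρ : N.γ ^ s.degree * N.norm z ^ p ≤ ρ) :
    (centerHom k n p z * φ (mon k s)) ^ p - centerHom k n p (f (monomial s 1) * z ^ p) ∈
      orderLE φ N (N.γ⁻¹ * ρ ^ p) := by
  have heq : (centerHom k n p z * φ (mon k s)) ^ p - centerHom k n p (f (monomial s 1) * z ^ p) =
      φ (mon k s ^ p - centerHom k n p (monomial s 1)) * centerHom k n p (z ^ p) := by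
    rw [(centerHom_commute p z _).eq, (centerHom_commute p z _).symm.mul_pow, map_sub,
      show φ (centerHom k n p _) = centerHom k n p (f _) from DFunLike.congr_fun hf _, sub_mul,
      map_pow, map_mul, map_pow]
  rw [heq]
  refine map_mul_centerHom_mem_orderLE_inv_γ_mul (mon_pow_char_sub_mem_bernstein p s) ?_
  calc
    N.γ ^ (p * s.degree) * N.norm (z ^ p) ^ p ≤ N.γ ^ (p * s.degree) * (N.norm z ^ p) ^ p := by
      gcongr
      exact N.norm_pow_le z p
    _ = (N.γ ^ s.degree * N.norm z ^ p) ^ p := by rw [mul_pow, mul_comm p, pow_mul]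
    _ ≤ ρ ^ p := pow_le_pow_left' hρ p

theorem centralCombination_pow_sub_mem_orderLE (hp : p.Prime)
    {h : MvPolynomial (Fin n ⊕ Fin n) (MvPolynomial (Fin n ⊕ Fin n) k)} {ρ : Γ}
    (hρ : ∀ s ∈ h.support, N.γ ^ s.degree * N.norm (coeff s h) ^ p ≤ ρ) :
    centralCombination p φ h ^ p -
      centerHom k n p (∑ s ∈ h.support, f (monomial s 1) * coeff s h ^ p) ∈
        orderLE φ N (N.γ⁻¹ * ρ ^ p) := by
  have hpA : (p : WeylAlgebra k n) = 0 := by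
    rw [← map_natCast (algebraMap k (WeylAlgebra k n)), CharP.cast_eq_zero, map_zero]
  have hterm (s) (hs : s ∈ h.support) :
      centerHom k n p (coeff s h) * φ (mon k s) ∈ orderLE φ N (ρ ^ 1) := by
    rw [pow_one, (centerHom_commute p _ _).eq]
    exact map_mul_centerHom_mem_orderLE (mon_mem_bernstein s.degree.lt_succ_self) (hρ s hs)
  have hfrob := (almostCommFiltration_orderLE φ N ρ).sum_pow_prime_sub_mem hp hpA hterm
  rw [centralCombination_eq_sum, map_sum,
    ← sub_add_sub_cancel _ (∑ s ∈ h.support, (centerHom k n p (coeff s h) * φ (mon k s)) ^ p),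
    ← Finset.sum_sub_distrib]
  exact add_mem hfrob
    (sum_mem fun s hs => centerHom_mul_map_mon_pow_sub_mem_orderLE hf N (hρ s hs))

theorem order_coeff_le_norm_of_centralCombination_pow_eq (hp : p.Prime)
    {h : MvPolynomial (Fin n ⊕ Fin n) (MvPolynomial (Fin n ⊕ Fin n) k)}
    {g : MvPolynomial (Fin n ⊕ Fin n) k} (hh : h ∈ degreeOfLT _ _ p)
    (hg : centralCombination p φ h ^ p = centerHom k n p g) {s : Fin n ⊕ Fin n →₀ ℕ}
    (hs : s ∈ h.support) : N.γ ^ s.degree * N.norm (coeff s h) ^ p ≤ N.norm g := by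
  obtain ⟨t, ht, hmax⟩ := h.support.exists_max_image
    (fun s => N.γ ^ s.degree * N.norm (coeff s h) ^ p) ⟨s, hs⟩
  refine (hmax s hs).trans ?_
  set ρ := N.γ ^ t.degree * N.norm (coeff t h) ^ p
  have hρ : 0 < ρ := mul_pos (pow_pos N.γ_pos _)
    (pow_pos (zero_lt_iff.2 (N.norm_ne_zero _ (mem_support_iff.1 ht))) p)
  set y := ∑ s ∈ h.support, f (monomial s 1) * coeff s h ^ p
  have hρy : ρ ≤ N.norm y :=
    N.norm_orthogonal h.support (mem_degreeOfLT.1 hh) (fun s => coeff s h) t ht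
  have hclose : N.norm (g - y) ^ p ≤ N.γ⁻¹ * ρ ^ p := by
    refine norm_pow_le_of_centerHom_mem_orderLE hf hp.ne_zero ?_
    rw [map_sub, ← hg]
    exact centralCombination_pow_sub_mem_orderLE hf N hp hmax
  refine (le_max_iff.1 (hρy.trans (N.norm_le_max_norm_sub g y))).resolve_right fun hle => ?_
  exact ((pow_le_pow_left' hle p).trans hclose).not_gt (N.inv_γ_mul_lt (pow_pos hρ p))

include N

theorem gen_mem_range (hp : p.Prime) (j : Fin n ⊕ Fin n) : gen k j ∈ φ.range := by
  obtain ⟨h, hh, hj⟩ := exists_centralCombination_eq φ hp.ne_zero (gen k j)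
  have hconst (s) (hs : s ∈ h.support) : ∃ c, coeff s h = C c := by
    refine eq_C_of_isIntegral (N.isIntegral_of_norm_pow_le _ ?_)
    calc
      N.norm (coeff s h) ^ p ≤ N.γ ^ s.degree * N.norm (coeff s h) ^ p :=
        le_mul_of_one_le_left' (one_le_pow₀ N.one_lt_γ.le)
      _ ≤ N.norm (X j) := order_coeff_le_norm_of_centralCombination_pow_eq hf N hp hh
        (by rw [hj, centerHom_X]) hs
      _ ≤ N.γ ^ r := N.norm_gen_le j
  rw [← hj, centralCombination_eq_sum]
  refine sum_mem fun s hs => ?_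
  obtain ⟨c, hc⟩ := hconst s hs
  rw [hc, centerHom_C]
  exact mul_mem (φ.range.algebraMap_mem c) ⟨_, rfl⟩

theorem surjective_of_normAtInfinity (hp : p.Prime) : Function.Surjective φ := by
  rw [← AlgHom.range_eq_top, eq_top_iff, ← adjoin_range_gen, Algebra.adjoin_le_iff]
  rintro _ ⟨j, rfl⟩
  exact gen_mem_range hf N hp j

end Surjectivity

end WeylAlgebra

/-- For all positive integers `n` and `d` there is a bound `D = D(n, d)`
depending only on `n` and `d` such that: for every field `k` of characteristic `p > D` and
every `k`-algebra endomorphism `φ` of `A = A_n(k)` with `deg(φ) ≤ d` for which the bimodule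
`₍φ₎A₍φ₎` is finitely generated (i.e. there are finitely many elements `g` such that every
element of `A` is a sum of elements `φ(a) g φ(b)`), `φ` is an isomorphism. -/
theorem weylAlgebra_endomorphism_iso_of_fg_bimodule_large_char (n d : ℕ)
    (hn : 0 < n) (hd : 0 < d) :
    ∃ D : ℕ, ∀ (k : Type u) [Field k], ∀ (p : ℕ) [CharP k p], D < p →
      ∀ φ : WeylAlgebra k n →ₐ[k] WeylAlgebra k n, weylHomDeg φ ≤ d →
        (∃ s : Finset (WeylAlgebra k n),
          AddSubgroup.closure {x : WeylAlgebra k n |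
            ∃ g ∈ s, ∃ a b : WeylAlgebra k n, x = φ a * g * φ b} = ⊤) →
        Function.Bijective φ := by
  have : Nonempty (Fin n ⊕ Fin n) := ⟨.inl ⟨0, hn⟩⟩
  obtain ⟨D, r, exists_norm⟩ := exists_normAtInfinity_of_large_char (Fin n ⊕ Fin n) hd
  refine ⟨D, fun k _ p _ hDp φ hdeg ⟨s, hs⟩ => ?_⟩
  have hp : p.Prime := (CharP.char_is_prime_or_zero k p).resolve_right (by lia)
  have : Fact p.Prime := ⟨hp⟩
  obtain ⟨f, hf⟩ := WeylAlgebra.exists_algHom_map_centerHom φ hp.ne_zero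
  have hfin := WeylAlgebra.finite_center_algHom_of_fg_bimodule hf hp.ne_zero hs
  obtain ⟨Γ, _, ⟨N⟩⟩ := exists_norm k p hDp f hfin
    (WeylAlgebra.totalDegree_center_algHom_X_le hf hp.ne_zero hdeg)
  exact ⟨WeylAlgebra.injective_of_injective_on_center hf hp.ne_zero
    (injective_of_finite_algHom f hfin), WeylAlgebra.surjective_of_normAtInfinity hf N hp⟩
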